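/- arXiv:2005.10032 — 4 statements merged into one kernel-verified Lean document; each statement's English description precedes it below -/
import Mathlib

section
/- Let p ∈ [1,∞] and let f(z) = Σ_α a_α z^α + Σ_α conj(b_α) conj(z)^α be a pluriharmonic function from 𝔹_{ℓ_pⁿ} into the unit disk 𝔻. Then for every multi-index α with |α| ≥ 1, |a_α| + |b_α| ≤ (4/π) · ( |α|^{|α|} / α^α )^{1/p} (with the convention that the exponent 1/p equals 0 when p = ∞). -/
open scoped BigOperators ENNReal

open scoped Classical in
/-- The `p`-norm on `ℂ^n` for `p ∈ [1,∞]` (`ℝ≥0∞`-valued exponent):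
the sup norm if `p = ∞`, and `(∑ ‖z j‖^p)^(1/p)` otherwise. -/
noncomputable def pnormE {n : ℕ} (p : ℝ≥0∞) (z : Fin n → ℂ) : ℝ :=
  if p = ∞ then ⨆ j, ‖z j‖ else (∑ j, ‖z j‖ ^ p.toReal) ^ (1 / p.toReal)

/-!
Restrict `f` to a polytorus `|z_k| = r_k`. There its Fourier coefficients of frequencies `α` and
`-α` are `a_α r^α` and `conj (b_α) r^α`. For unimodular `u` and `v`, the trigonometric polynomial
`u e^{-iαθ} + v e^{iαθ}` has `L¹` norm `4 / π`, the mean of `2 |sin|`; choosing `u` and `v` to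
align the phases of the two coefficients gives `(|a_α| + |b_α|) r^α ≤ 4 / π`. On the closed `ℓ_p`
ball, `r^α` is largest at `r_k = (α_k / |α|)^{1/p}`, and the bound follows by letting `r` tend to
this point along its ray.
-/

open MeasureTheory Filter Topology UnitAddTorus
open scoped ComplexConjugate

lemma norm_toCircle_sub_one {x : ℝ} (hx : x ∈ Set.Icc (0 : ℝ) 1) :
    ‖(AddCircle.toCircle (x : UnitAddCircle) : ℂ) - 1‖ = 2 * Real.sin (Real.pi * x) := by
  have hsin : 0 ≤ Real.sin (Real.pi * x) :=
    Real.sin_nonneg_of_nonneg_of_le_pi (mul_nonneg Real.pi_pos.le hx.1)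
      (mul_le_of_le_one_right Real.pi_pos.le hx.2)
  have hexp : (AddCircle.toCircle (x : UnitAddCircle) : ℂ) =
      Complex.exp (Complex.I * (2 * Real.pi * x : ℝ)) := by
    rw [AddCircle.toCircle_apply_mk, Circle.coe_exp, div_one, mul_comm]
  have hhalf : 2 * Real.pi * x / 2 = Real.pi * x := by ring
  rw [hexp, Complex.norm_exp_I_mul_ofReal_sub_one, hhalf, Real.norm_of_nonneg (by positivity)]

lemma integral_norm_toCircle_sub_one :
    ∫ y : UnitAddCircle, ‖(AddCircle.toCircle y : ℂ) - 1‖ ∂AddCircle.haarAddCircle =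
      4 / Real.pi := by
  rw [AddCircle.integral_haarAddCircle, inv_one, one_smul,
    ← UnitAddCircle.intervalIntegral_preimage 0, zero_add]
  calc ∫ x in (0 : ℝ)..1, ‖(AddCircle.toCircle (x : UnitAddCircle) : ℂ) - 1‖
      = ∫ x in (0 : ℝ)..1, 2 * Real.sin (Real.pi * x) :=
        intervalIntegral.integral_congr fun x hx ↦
          norm_toCircle_sub_one (Set.uIcc_of_le (zero_le_one' ℝ) ▸ hx)
    _ = 4 / Real.pi := by
        rw [intervalIntegral.integral_const_mul,
          intervalIntegral.integral_comp_mul_left _ Real.pi_ne_zero, integral_sin]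
        simp only [mul_zero, mul_one, Real.cos_zero, Real.cos_pi, smul_eq_mul]
        ring

/-- The frequencies of the monomials `z^β` (left summand) and `conj z^β` (right summand) on the
torus. -/
def signedFrequency {ι : Type*} : (ι → ℕ) ⊕ (ι → ℕ) → ι → ℤ :=
  Sum.elim (fun β k ↦ (β k : ℤ)) fun β ↦ -fun k ↦ (β k : ℤ)

lemma eq_of_signedFrequency_eq {ι : Type*} {m m₀ : (ι → ℕ) ⊕ (ι → ℕ)}
    (hm₀ : signedFrequency m₀ ≠ 0) (h : signedFrequency m = signedFrequency m₀) : m = m₀ := by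
  obtain ⟨i, hi⟩ := Function.ne_iff.mp hm₀
  have hcoord := congrFun h
  rcases m with β | β <;> rcases m₀ with α | α <;>
    simp only [signedFrequency, Sum.elim_inl, Sum.elim_inr, Pi.neg_apply, Pi.zero_apply, neg_inj,
      Nat.cast_inj] at hcoord hi
  · exact congrArg Sum.inl (funext hcoord)
  · have := hcoord i
    omega
  · have := hcoord i
    omega
  · exact congrArg Sum.inr (funext hcoord)

section Torus

-- `mFourierCoeff` integrates against Haar probability measure, which is not the global `volume`.
noncomputable local instance unitAddCircleHaarMeasureSpace : MeasureSpace UnitAddCircle :=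
  ⟨AddCircle.haarAddCircle⟩

local instance isAddHaarMeasure_unitAddCircle :
    (volume : Measure UnitAddCircle).IsAddHaarMeasure :=
  inferInstanceAs AddCircle.haarAddCircle.IsAddHaarMeasure

local instance isProbabilityMeasure_unitAddCircle :
    IsProbabilityMeasure (volume : Measure UnitAddCircle) :=
  inferInstanceAs (IsProbabilityMeasure AddCircle.haarAddCircle)

variable {ι : Type*} [Fintype ι]

/-- The phase `x ↦ ∑ i, γ i • x i` of the character of frequency `γ` on the torus, as a
homomorphism to the circle. -/
def torusPhase (γ : ι → ℤ) : UnitAddTorus ι →+ UnitAddCircle :=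
  ∑ i, γ i • Pi.evalAddMonoidHom (fun _ : ι ↦ UnitAddCircle) i

lemma torusPhase_apply (γ : ι → ℤ) (x : UnitAddTorus ι) : torusPhase γ x = ∑ i, γ i • x i := by
  simp [torusPhase]

lemma mFourier_eq_toCircle_torusPhase (γ : ι → ℤ) (x : UnitAddTorus ι) :
    mFourier γ x = AddCircle.toCircle (torusPhase γ x) := by
  simp only [mFourier, ContinuousMap.coe_mk, fourier_apply, torusPhase_apply]
  exact (map_prod (Circle.coeHom.compAddChar AddCircle.toCircle_addChar).toMonoidHom
    (fun i ↦ Multiplicative.ofAdd (γ i • x i)) Finset.univ).symm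

lemma norm_mFourier_apply (γ : ι → ℤ) (x : UnitAddTorus ι) : ‖mFourier γ x‖ = 1 := by
  rw [mFourier_eq_toCircle_torusPhase, Circle.norm_coe]

lemma surjective_torusPhase {γ : ι → ℤ} (hγ : γ ≠ 0) : Function.Surjective (torusPhase γ) := by
  classical
  obtain ⟨i, hi⟩ := Function.ne_iff.mp hγ
  intro y
  obtain ⟨t, rfl⟩ := QuotientAddGroup.mk_surjective y
  refine ⟨Pi.single i ((t / γ i : ℝ) : UnitAddCircle), ?_⟩
  have hdiv : γ i • (t / γ i : ℝ) = t := by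
    rw [zsmul_eq_mul, mul_div_cancel₀ t (Int.cast_ne_zero.mpr hi)]
  rw [torusPhase_apply, Fintype.sum_eq_single i fun j hj ↦ by rw [Pi.single_eq_of_ne hj, smul_zero],
    Pi.single_eq_same, ← AddCircle.coe_zsmul, hdiv]

lemma measurePreserving_torusPhase {γ : ι → ℤ} (hγ : γ ≠ 0) :
    MeasurePreserving (torusPhase γ) := by
  have hcont : Continuous (torusPhase γ) := by
    simp only [funext (torusPhase_apply γ)]
    fun_prop
  exact AddMonoidHom.measurePreserving hcont (surjective_torusPhase hγ)
    (by simp only [measure_univ])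

lemma integral_norm_mul_mFourier_sub_one {c : ℂ} (hc : ‖c‖ = 1) {γ : ι → ℤ} (hγ : γ ≠ 0) :
    ∫ x, ‖c * mFourier γ x - 1‖ = 4 / Real.pi := by
  obtain ⟨t, ht⟩ := (AddCircle.homeomorphCircle (one_ne_zero' ℝ)).surjective
    ⟨c, mem_sphere_zero_iff_norm.mpr hc⟩
  have ht : (AddCircle.toCircle t : ℂ) = c := by
    rw [← AddCircle.homeomorphCircle_apply one_ne_zero, ht]
  have hmul (x : UnitAddTorus ι) :
      c * mFourier γ x = AddCircle.toCircle (t + torusPhase γ x) := by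
    rw [← ht, mFourier_eq_toCircle_torusPhase, AddCircle.toCircle_add, Circle.coe_mul]
  have hcont : Continuous fun y : UnitAddCircle ↦ ‖(AddCircle.toCircle (t + y) : ℂ) - 1‖ := by
    have := AddCircle.continuous_toCircle (T := 1)
    fun_prop
  have hphase := measurePreserving_torusPhase hγ
  calc ∫ x, ‖c * mFourier γ x - 1‖
      = ∫ x, ‖(AddCircle.toCircle (t + torusPhase γ x) : ℂ) - 1‖ := by simp only [hmul]
    _ = ∫ y : UnitAddCircle, ‖(AddCircle.toCircle (t + y) : ℂ) - 1‖ := by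
        rw [← hphase.map_eq, integral_map hphase.aemeasurable hcont.aestronglyMeasurable]
    _ = ∫ y : UnitAddCircle, ‖(AddCircle.toCircle y : ℂ) - 1‖ :=
        integral_add_left_eq_self (fun y ↦ ‖(AddCircle.toCircle y : ℂ) - 1‖) t
    _ = 4 / Real.pi := integral_norm_toCircle_sub_one

lemma integral_norm_mul_mFourier_neg_add_mul_mFourier {u v : ℂ} (hu : ‖u‖ = 1) (hv : ‖v‖ = 1)
    {γ : ι → ℤ} (hγ : γ ≠ 0) :
    ∫ x, ‖u * mFourier (-γ) x + v * mFourier γ x‖ = 4 / Real.pi := by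
  have hu0 : u ≠ 0 := norm_ne_zero_iff.mp (hu ▸ one_ne_zero)
  have hfactor (x : UnitAddTorus ι) : u * mFourier (-γ) x + v * mFourier γ x =
      -u * mFourier (-γ) x * (-(v / u) * mFourier (γ + γ) x - 1) := by
    have hinv : mFourier (-γ) x * mFourier γ x = 1 := by
      rw [← mFourier_add, neg_add_cancel, mFourier_zero, ContinuousMap.one_apply]
    rw [mFourier_add]
    field_simp
    linear_combination -v * mFourier γ x * hinv
  have hnorm (x : UnitAddTorus ι) : ‖u * mFourier (-γ) x + v * mFourier γ x‖ =
      ‖-(v / u) * mFourier (γ + γ) x - 1‖ := by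
    rw [hfactor, norm_mul, norm_mul, norm_neg, hu, norm_mFourier_apply, one_mul, one_mul]
  simp only [hnorm]
  exact integral_norm_mul_mFourier_sub_one (by rw [norm_neg, norm_div, hu, hv, div_one])
    fun h ↦ hγ (self_eq_neg.mp (eq_neg_of_add_eq_zero_left h))

lemma norm_mFourierCoeff_add_norm_mFourierCoeff_neg_le {F : UnitAddTorus ι → ℂ} {M : ℝ}
    (hF : AEStronglyMeasurable F) (hM : ∀ᵐ x, ‖F x‖ ≤ M) {γ : ι → ℤ} (hγ : γ ≠ 0) :
    ‖mFourierCoeff F γ‖ + ‖mFourierCoeff F (-γ)‖ ≤ 4 / Real.pi * M := by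
  have hint (δ : ι → ℤ) : Integrable fun x ↦ mFourier δ x • F x :=
    (Integrable.of_bound hF M hM).bdd_smul 1 (mFourier δ).continuous.aestronglyMeasurable
      (.of_forall fun x ↦ (norm_mFourier_apply δ x).le)
  obtain ⟨u, hu, hu_mul⟩ := Complex.exists_norm_eq_mul_self (mFourierCoeff F γ)
  obtain ⟨v, hv, hv_mul⟩ := Complex.exists_norm_eq_mul_self (mFourierCoeff F (-γ))
  have hpair : ∫ x, (u * mFourier (-γ) x + v * mFourier γ x) * F x =
      (‖mFourierCoeff F γ‖ + ‖mFourierCoeff F (-γ)‖ : ℝ) := by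
    rw [Complex.ofReal_add, hu_mul, hv_mul, mFourierCoeff, mFourierCoeff, neg_neg,
      ← integral_const_mul, ← integral_const_mul,
      ← integral_add ((hint _).const_mul u) ((hint _).const_mul v)]
    exact integral_congr_ae (.of_forall fun x ↦ by simp only [smul_eq_mul]; ring)
  calc ‖mFourierCoeff F γ‖ + ‖mFourierCoeff F (-γ)‖
      ≤ ‖∫ x, (u * mFourier (-γ) x + v * mFourier γ x) * F x‖ := by
        rw [hpair, Complex.norm_real]
        exact le_abs_self _
    _ ≤ ∫ x, ‖u * mFourier (-γ) x + v * mFourier γ x‖ * M := by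
        refine norm_integral_le_of_norm_le ?_ (hM.mono fun x hx ↦ ?_)
        · exact Continuous.integrable_of_hasCompactSupport (by fun_prop)
            (HasCompactSupport.of_compactSpace _)
        · rw [norm_mul]
          gcongr
    _ = 4 / Real.pi * M := by
        rw [integral_mul_const, integral_norm_mul_mFourier_neg_add_mul_mFourier hu hv hγ]

lemma mFourierCoeff_eq_of_hasSum {κ : Type*} {c : κ → ℂ} {e : κ → ι → ℤ}
    {F : C(UnitAddTorus ι, ℂ)} (hF : HasSum (fun k ↦ c k • mFourier (e k)) F) {k₀ : κ}
    (hk₀ : ∀ k, e k = e k₀ → k = k₀) : mFourierCoeff F (e k₀) = c k₀ := by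
  have hinner : HasSum (fun k ↦ c k * inner ℂ (mFourierLp 2 (e k₀)) (mFourierLp 2 (e k)))
      (inner ℂ (mFourierLp 2 (e k₀)) (ContinuousMap.toLp 2 volume ℂ F)) := by
    simpa using! (hF.mapL (ContinuousMap.toLp 2 volume ℂ)).mapL (innerSL ℂ (mFourierLp 2 (e k₀)))
  have hortho (k : κ) (hk : k ≠ k₀) :
      c k * inner ℂ (mFourierLp 2 (e k₀)) (mFourierLp 2 (e k)) = 0 := by
    rw [orthonormal_mFourier.2 fun h ↦ hk (hk₀ k h.symm), mul_zero]
  rw [← mFourierCoeff_toLp, ← mFourierBasis_repr, HilbertBasis.repr_apply_apply,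
    coe_mFourierBasis, hinner.unique (hasSum_single k₀ hortho),
    inner_self_eq_one_of_norm_eq_one (orthonormal_mFourier.1 _), mul_one]

lemma mFourier_natCast (β : ι → ℕ) (x : UnitAddTorus ι) :
    mFourier (fun k ↦ (β k : ℤ)) x = ∏ k, (AddCircle.toCircle (x k) : ℂ) ^ β k := by
  simp [mFourier, AddCircle.toCircle_nsmul]

lemma exists_continuousMap_hasSum_mFourier_add_conj {c d : (ι → ℕ) → ℂ}
    {H G : UnitAddTorus ι → ℂ}
    (hH : ∀ x, HasSum (fun β ↦ c β * mFourier (fun k ↦ (β k : ℤ)) x) (H x))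
    (hG : ∀ x, HasSum (fun β ↦ d β * mFourier (fun k ↦ (β k : ℤ)) x) (G x)) :
    ∃ F : C(UnitAddTorus ι, ℂ), (∀ x, F x = H x + conj (G x)) ∧
      HasSum (fun m ↦ Sum.elim c (fun β ↦ conj (d β)) m • mFourier (signedFrequency m)) F := by
  have hcoeff : Summable fun m ↦ ‖Sum.elim c (fun β ↦ conj (d β)) m‖ := by
    refine Summable.sum _ ?_ ?_
    · simpa [Function.comp_def, norm_mFourier_apply] using (hH 0).summable.norm
    · simpa [Function.comp_def, norm_mFourier_apply] using (hG 0).summable.norm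
  obtain ⟨F, hF⟩ : Summable fun m ↦
      Sum.elim c (fun β ↦ conj (d β)) m • mFourier (signedFrequency m) :=
    .of_norm <| by simpa only [norm_smul, mFourier_norm, mul_one] using hcoeff
  refine ⟨F, fun x ↦ (ContinuousMap.hasSum_apply hF x).unique (HasSum.sum (hH x) ?_), hF⟩
  convert! Complex.hasSum_conj'.mpr (hG x) using 2 with β
  simp [signedFrequency, mFourier_neg]

lemma norm_add_norm_le_of_hasSum_mFourier_add_conj {c d : (ι → ℕ) → ℂ}
    {H G : UnitAddTorus ι → ℂ} {M : ℝ}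
    (hH : ∀ x, HasSum (fun β ↦ c β * mFourier (fun k ↦ (β k : ℤ)) x) (H x))
    (hG : ∀ x, HasSum (fun β ↦ d β * mFourier (fun k ↦ (β k : ℤ)) x) (G x))
    (hM : ∀ x, ‖H x + conj (G x)‖ ≤ M) {α : ι → ℕ} (hα : α ≠ 0) :
    ‖c α‖ + ‖d α‖ ≤ 4 / Real.pi * M := by
  obtain ⟨F, hF_apply, hF⟩ := exists_continuousMap_hasSum_mFourier_add_conj hH hG
  have hα' : signedFrequency (.inl α) ≠ 0 := fun h ↦
    hα (funext fun k ↦ Int.natCast_eq_zero.mp (congrFun h k))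
  have hc : mFourierCoeff F (signedFrequency (.inl α)) = c α :=
    mFourierCoeff_eq_of_hasSum hF fun _ ↦ eq_of_signedFrequency_eq hα'
  have hd : mFourierCoeff F (-signedFrequency (.inl α)) = conj (d α) :=
    mFourierCoeff_eq_of_hasSum hF (k₀ := .inr α) fun _ ↦
      eq_of_signedFrequency_eq (neg_ne_zero.mpr hα')
  have hbound := norm_mFourierCoeff_add_norm_mFourierCoeff_neg_le
    F.continuous.aestronglyMeasurable (.of_forall fun x ↦ hF_apply x ▸ hM x) hα'
  rwa [hc, hd, RCLike.norm_conj] at hbound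

end Torus

variable {ι : Type*} [Fintype ι]

lemma norm_toLp_eq_of_norm_eq_mul_rpow {p : ℝ≥0∞} (hp : 0 < p) {w : ι → ℝ} (hw : ∀ k, 0 ≤ w k)
    (hw_sum : ∑ k, w k = 1) {s : ℝ} (hs : 0 ≤ s) {z : ι → ℂ}
    (hz : ∀ k, ‖z k‖ = s * w k ^ p.toReal⁻¹) : ‖WithLp.toLp p z‖ = s := by
  rcases eq_or_ne p ∞ with rfl | hp_top
  · have : Nonempty ι := by
      by_contra h
      simp [not_nonempty_iff.mp h] at hw_sum
    simp [PiLp.norm_eq_ciSup, hz]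
  · have hp' : 0 < p.toReal := ENNReal.toReal_pos hp.ne' hp_top
    have hpow (k : ι) : ‖z k‖ ^ p.toReal = s ^ p.toReal * w k := by
      rw [hz, Real.mul_rpow hs (Real.rpow_nonneg (hw k) _), Real.rpow_inv_rpow (hw k) hp'.ne']
    simp only [PiLp.norm_eq_sum hp', hpow]
    rw [← Finset.mul_sum, hw_sum, mul_one, one_div, Real.rpow_rpow_inv hs hp'.ne']

lemma prod_mul_rpow_pow {w : ι → ℝ} (hw : ∀ k, 0 ≤ w k) (s q : ℝ) (α : ι → ℕ) :
    ∏ k, (s * w k ^ q) ^ α k = s ^ (∑ k, α k) * (∏ k, w k ^ α k) ^ q := by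
  simp only [mul_pow]
  rw [Finset.prod_mul_distrib, Finset.prod_pow_eq_pow_sum,
    ← Real.finsetProd_rpow _ _ fun k _ ↦ pow_nonneg (hw k) _]
  simp only [Real.rpow_pow_comm (hw _)]

/-- `f` is pluriharmonic on `s` with coefficients `a` and `b`: at each point of `s` both power
series converge and `f z = ∑ a_α z^α + conj (∑ b_α z^α)`. The constant term may be split between
`a 0` and `b 0`. -/
def HasPluriharmonicExpansionOn (f : (ι → ℂ) → ℂ) (a b : (ι → ℕ) → ℂ) (s : Set (ι → ℂ)) : Prop :=
  ∀ z ∈ s, ∃ u v : ℂ, HasSum (fun α ↦ a α * ∏ k, z k ^ α k) u ∧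
    HasSum (fun α ↦ b α * ∏ k, z k ^ α k) v ∧ f z = u + conj v

namespace HasPluriharmonicExpansionOn

variable {f : (ι → ℂ) → ℂ} {a b : (ι → ℕ) → ℂ}

lemma mono {s t : Set (ι → ℂ)} (hf : HasPluriharmonicExpansionOn f a b t) (hst : s ⊆ t) :
    HasPluriharmonicExpansionOn f a b s :=
  fun z hz ↦ hf z (hst hz)

lemma norm_add_norm_mul_prod_pow_le {r : ι → ℝ} (hr : ∀ k, 0 ≤ r k) {M : ℝ}
    (hf : HasPluriharmonicExpansionOn f a b {z | ∀ k, ‖z k‖ = r k})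
    (hM : ∀ z, (∀ k, ‖z k‖ = r k) → ‖f z‖ ≤ M) {α : ι → ℕ} (hα : α ≠ 0) :
    (‖a α‖ + ‖b α‖) * ∏ k, r k ^ α k ≤ 4 / Real.pi * M := by
  let z (x : UnitAddTorus ι) (k : ι) : ℂ := r k * AddCircle.toCircle (x k)
  have hz (x : UnitAddTorus ι) (k : ι) : ‖z x k‖ = r k := by
    rw [norm_mul, Circle.norm_coe, mul_one, Complex.norm_of_nonneg (hr k)]
  have hmonomial (c : (ι → ℕ) → ℂ) (x : UnitAddTorus ι) (β : ι → ℕ) :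
      c β * ∏ k, z x k ^ β k =
        c β * (∏ k, r k ^ β k : ℝ) * mFourier (fun k ↦ (β k : ℤ)) x := by
    simp only [z, mFourier_natCast, mul_pow, Finset.prod_mul_distrib, mul_assoc,
      Complex.ofReal_prod, Complex.ofReal_pow]
  choose H G hH hG hfz using fun x ↦ hf (z x) (hz x)
  simp only [hmonomial] at hH hG
  have hbound := norm_add_norm_le_of_hasSum_mFourier_add_conj hH hG
    (fun x ↦ hfz x ▸ hM (z x) (hz x)) hα
  have hprod : 0 ≤ ∏ k, r k ^ α k := Finset.prod_nonneg fun k _ ↦ pow_nonneg (hr k) _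
  rwa [norm_mul, norm_mul, Complex.norm_of_nonneg hprod, ← add_mul] at hbound

lemma norm_add_norm_mul_prod_rpow_le {p : ℝ≥0∞} (hp : 0 < p) {M : ℝ}
    (hf : HasPluriharmonicExpansionOn f a b {z | ‖WithLp.toLp p z‖ < 1})
    (hM : ∀ z, ‖WithLp.toLp p z‖ < 1 → ‖f z‖ ≤ M) {w : ι → ℝ} (hw : ∀ k, 0 ≤ w k)
    (hw_sum : ∑ k, w k = 1) {α : ι → ℕ} (hα : α ≠ 0) :
    (‖a α‖ + ‖b α‖) * (∏ k, w k ^ α k) ^ p.toReal⁻¹ ≤ 4 / Real.pi * M := by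
  have hscaled : ∀ s ∈ Set.Ioo (0 : ℝ) 1, (‖a α‖ + ‖b α‖) *
      (s ^ (∑ k, α k) * (∏ k, w k ^ α k) ^ p.toReal⁻¹) ≤ 4 / Real.pi * M := by
    rintro s ⟨hs₀, hs₁⟩
    have hball (z : ι → ℂ) (hz : ∀ k, ‖z k‖ = s * w k ^ p.toReal⁻¹) : ‖WithLp.toLp p z‖ < 1 :=
      (norm_toLp_eq_of_norm_eq_mul_rpow hp hw hw_sum hs₀.le hz).trans_lt hs₁
    rw [← prod_mul_rpow_pow hw]
    exact (hf.mono hball).norm_add_norm_mul_prod_pow_le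
      (fun k ↦ mul_nonneg hs₀.le (Real.rpow_nonneg (hw k) _)) (fun z hz ↦ hM z (hball z hz)) hα
  have hlim : Tendsto (fun s : ℝ ↦ (‖a α‖ + ‖b α‖) *
      (s ^ (∑ k, α k) * (∏ k, w k ^ α k) ^ p.toReal⁻¹)) (𝓝[<] 1)
      (𝓝 ((‖a α‖ + ‖b α‖) * (1 ^ (∑ k, α k) * (∏ k, w k ^ α k) ^ p.toReal⁻¹))) :=
    (Continuous.tendsto (by fun_prop) 1).mono_left nhdsWithin_le_nhds
  simpa only [one_pow, one_mul] using
    le_of_tendsto hlim (eventually_of_mem (Ioo_mem_nhdsLT one_pos) hscaled)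

end HasPluriharmonicExpansionOn

theorem stmt6_general {p : ℝ≥0∞} (hp : 0 < p) {f : (ι → ℂ) → ℂ} {a b : (ι → ℕ) → ℂ} {M : ℝ}
    (hf : HasPluriharmonicExpansionOn f a b {z | ‖WithLp.toLp p z‖ < 1})
    (hM : ∀ z, ‖WithLp.toLp p z‖ < 1 → ‖f z‖ ≤ M) {α : ι → ℕ} (hα : α ≠ 0) :
    ‖a α‖ + ‖b α‖ ≤ 4 / Real.pi * M *
      (((∑ k, α k : ℕ) : ℝ) ^ (∑ k, α k) / ∏ k, (α k : ℝ) ^ α k) ^ p.toReal⁻¹ := by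
  have hsum : (0 : ℝ) < (∑ k, α k : ℕ) := by
    exact_mod_cast Finset.sum_pos' (fun _ _ ↦ Nat.zero_le _)
      (by simpa [Nat.pos_iff_ne_zero] using Function.ne_iff.mp hα)
  have hw_sum : ∑ k, (α k : ℝ) / (∑ j, α j : ℕ) = 1 := by
    rw [← Finset.sum_div, ← Nat.cast_sum, div_self hsum.ne']
  have hprod : ∏ k, ((α k : ℝ) / (∑ j, α j : ℕ)) ^ α k =
      (((∑ k, α k : ℕ) : ℝ) ^ (∑ k, α k) / ∏ k, (α k : ℝ) ^ α k)⁻¹ := by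
    simp only [div_pow]
    rw [Finset.prod_div_distrib, Finset.prod_pow_eq_pow_sum, inv_div]
  have hpos : 0 < ((∑ k, α k : ℕ) : ℝ) ^ (∑ k, α k) / ∏ k, (α k : ℝ) ^ α k :=
    div_pos (pow_pos hsum _) (Finset.prod_pos fun k _ ↦ by exact_mod_cast Nat.pow_self_pos)
  have hbound := hf.norm_add_norm_mul_prod_rpow_le hp hM (fun k ↦ by positivity) hw_sum hα
  rwa [hprod, Real.inv_rpow hpos.le, ← div_eq_mul_inv, div_le_iff₀ (by positivity)] at hbound

lemma pnormE_eq_norm_toLp {n : ℕ} {p : ℝ≥0∞} (hp : 0 < p) (z : Fin n → ℂ) :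
    pnormE p z = ‖WithLp.toLp p z‖ :=
  (if_neg hp.ne').symm

theorem stmt6 (n : ℕ) (hn : 1 ≤ n) (p : ℝ≥0∞) (hp : 1 ≤ p)
    (f h g : (Fin n → ℂ) → ℂ) (a b : (Fin n → ℕ) → ℂ) (hb0 : b 0 = 0)
    (hh : DifferentiableOn ℂ h {z | pnormE p z < 1})
    (hg : DifferentiableOn ℂ g {z | pnormE p z < 1})
    (hg0 : g 0 = 0)
    (hfd : ∀ z : Fin n → ℂ, pnormE p z < 1 → f z = h z + (starRingEnd ℂ) (g z))
    (hha : ∀ z : Fin n → ℂ, pnormE p z < 1 →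
      HasSum (fun α : Fin n → ℕ => a α * ∏ k, z k ^ α k) (h z))
    (hgb : ∀ z : Fin n → ℂ, pnormE p z < 1 →
      HasSum (fun α : Fin n → ℕ => b α * ∏ k, z k ^ α k) (g z))
    (hmap : ∀ z : Fin n → ℂ, pnormE p z < 1 → ‖f z‖ < 1)
    (α : Fin n → ℕ) (hα : 1 ≤ ∑ k, α k) :
    ‖a α‖ + ‖b α‖ ≤ (4 / Real.pi) *
      (((((∑ k, α k : ℕ) : ℝ) ^ (∑ k, α k)) / ∏ k, ((α k : ℝ) ^ (α k))) ^ (p.toReal)⁻¹) := by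
  have hp_pos : 0 < p := one_pos.trans_le hp
  simp only [pnormE_eq_norm_toLp hp_pos] at hfd hha hgb hmap
  simpa only [mul_one] using stmt6_general hp_pos
    (fun z hz ↦ ⟨h z, g z, hha z hz, hgb z hz, hfd z hz⟩) (fun z hz ↦ (hmap z hz).le)
    (α := α) (by rintro rfl; simp at hα)
end

section
/- Let f be a (pluri)harmonic function of the unit disk 𝔻 into 𝔻. Then for every z ∈ 𝔻 and every integer m ≥ 1, |∂^m f(z)/∂z^m| + |∂^m f(z)/∂z̄^m| ≤ (4/π) m! (1 + |z|)^{m−1} / (1 − |z|²)^m. -/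
/-!
Rotating `f = h + conj g` by a unimodular `u` makes `Re (u f)` the real part of the holomorphic
function `u h + conj u · g`, and `u` can be chosen so that the `m`-th derivative of this function
at the given point has modulus `|h⁽ᵐ⁾| + |g⁽ᵐ⁾|`. It therefore suffices to bound the derivatives of
a single holomorphic function with bounded real part.

At the centre of the disc, the `n`-th derivative is obtained by averaging the real part against
`Re (a (w - c)ⁿ)` over circles, and the constant `4 / π` is twice the mean of `|cos|`. A disc
automorphism moves an arbitrary point to the centre without a Faà di Bruno expansion: multiplying
the composition by the `n`-th power of its denominator leaves a single term in the derivative of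
order `n + 1` (Bol's lemma).
-/

open Complex ComplexConjugate Filter Metric Real Set Topology

section MoebiusDerivatives

variable {𝕜 E : Type*} [NontriviallyNormedField 𝕜] [NormedAddCommGroup E] [NormedSpace 𝕜 E]
  {f : 𝕜 → E} {x : 𝕜} {n : ℕ}

theorem hasDerivAt_iteratedDeriv (hf : ContDiffAt 𝕜 (n + 1 : ℕ) f x) :
    HasDerivAt (iteratedDeriv n f) (iteratedDeriv (n + 1) f x) x := by
  have hdiff : DifferentiableAt 𝕜 (iteratedDeriv n f) x := by
    simpa only [iteratedDerivWithin_univ, differentiableWithinAt_univ] using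
      (contDiffWithinAt_univ.2 hf).differentiableWithinAt_iteratedDerivWithin (m := n)
        (by exact_mod_cast n.lt_succ_self) (by simp)
  simpa only [iteratedDeriv_succ] using hdiff.hasDerivAt

theorem hasDerivAt_affine (c d x : 𝕜) : HasDerivAt (fun t ↦ c * t + d) c x := by
  simpa using ((hasDerivAt_id x).const_mul c).add_const d

theorem hasDerivAt_const_div_affine_pow (e : 𝕜) {c d : 𝕜} (k : ℕ) (hx : c * x + d ≠ 0) :
    HasDerivAt (fun t ↦ e / (c * t + d) ^ k) (-(k * c * e) / (c * x + d) ^ (k + 1)) x := by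
  refine ((hasDerivAt_const x e).fun_div ((hasDerivAt_affine c d x).fun_pow k)
    (pow_ne_zero k hx)).congr_deriv ?_
  cases k with
  | zero => simp
  | succ k =>
    rw [Nat.add_sub_cancel]
    field_simp
    ring

theorem hasDerivAt_moebius (a b : 𝕜) {c d : 𝕜} (hx : c * x + d ≠ 0) :
    HasDerivAt (fun t ↦ (a * t + b) / (c * t + d)) ((a * d - b * c) / (c * x + d) ^ 2) x := by
  refine ((hasDerivAt_affine a b x).fun_div (hasDerivAt_affine c d x) hx).congr_deriv ?_
  ring

theorem iteratedDeriv_succ_affine_smul (c d : 𝕜) (hf : ContDiffAt 𝕜 (n + 1 : ℕ) f x) :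
    iteratedDeriv (n + 1) (fun t ↦ (c * t + d) • f t) x =
      (c * x + d) • iteratedDeriv (n + 1) f x + ((n + 1 : 𝕜) * c) • iteratedDeriv n f x := by
  induction n generalizing x with
  | zero =>
    have hderiv := (hasDerivAt_affine c d x).fun_smul (hasDerivAt_iteratedDeriv hf)
    simpa using hderiv.deriv
  | succ n ih =>
    have hlocal : iteratedDeriv (n + 1) (fun t ↦ (c * t + d) • f t) =ᶠ[𝓝 x] fun t ↦
        (c * t + d) • iteratedDeriv (n + 1) f t + ((n + 1 : 𝕜) * c) • iteratedDeriv n f t := by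
      filter_upwards [hf.eventually (by simp)] with t ht
      exact ih (ht.of_le (by exact_mod_cast (n + 1).le_succ))
    have hderiv := ((hasDerivAt_affine c d x).fun_smul (hasDerivAt_iteratedDeriv hf)).fun_add
      ((hasDerivAt_iteratedDeriv (hf.of_le (by exact_mod_cast (n + 1).le_succ))).fun_const_smul
        ((n + 1 : 𝕜) * c))
    rw [iteratedDeriv_succ, hlocal.deriv_eq, hderiv.deriv]
    push_cast
    module

theorem contDiffAt_pow_smul_comp_moebius (a b : 𝕜) {c d : 𝕜} (k : ℕ) {m : WithTop ℕ∞}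
    (hx : c * x + d ≠ 0) (hf : ContDiffAt 𝕜 m f ((a * x + b) / (c * x + d))) :
    ContDiffAt 𝕜 m (fun t ↦ (c * t + d) ^ k • f ((a * t + b) / (c * t + d))) x := by
  have hmoebius : ContDiffAt 𝕜 m (fun t ↦ (a * t + b) / (c * t + d)) x :=
    ContDiffAt.fun_div (by fun_prop) (by fun_prop) hx
  exact ContDiffAt.smul (by fun_prop) (hf.comp x hmoebius)

theorem iteratedDeriv_pow_smul_comp_moebius (a b : 𝕜) {c d : 𝕜} (hx : c * x + d ≠ 0)
    (hf : ContDiffAt 𝕜 (n + 1 : ℕ) f ((a * x + b) / (c * x + d))) :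
    iteratedDeriv (n + 1) (fun t ↦ (c * t + d) ^ n • f ((a * t + b) / (c * t + d))) x =
      ((a * d - b * c) ^ (n + 1) / (c * x + d) ^ (n + 2)) •
        iteratedDeriv (n + 1) f ((a * x + b) / (c * x + d)) := by
  induction n generalizing x with
  | zero =>
    have hderiv := (hasDerivAt_iteratedDeriv hf).scomp x (hasDerivAt_moebius a b hx)
    simpa [Function.comp_def] using hderiv.deriv
  | succ n ih =>
    have hlocal : iteratedDeriv (n + 1)
        (fun t ↦ (c * t + d) ^ n • f ((a * t + b) / (c * t + d))) =ᶠ[𝓝 x] fun t ↦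
          ((a * d - b * c) ^ (n + 1) / (c * t + d) ^ (n + 2)) •
            iteratedDeriv (n + 1) f ((a * t + b) / (c * t + d)) := by
      filter_upwards [(hasDerivAt_affine c d x).continuousAt.eventually_ne hx,
        (hasDerivAt_moebius a b hx).continuousAt.eventually (hf.eventually (by simp))] with t ht hft
      exact ih ht (hft.of_le (by exact_mod_cast (n + 1).le_succ))
    have hfactor := hasDerivAt_const_div_affine_pow ((a * d - b * c) ^ (n + 1)) (n + 2) hx
    have hcomp : HasDerivAt (fun t ↦ iteratedDeriv (n + 1) f ((a * t + b) / (c * t + d)))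
        (((a * d - b * c) / (c * x + d) ^ 2) •
          iteratedDeriv (n + 2) f ((a * x + b) / (c * x + d))) x :=
      HasDerivAt.scomp (g₁ := iteratedDeriv (n + 1) f) x (hasDerivAt_iteratedDeriv hf)
        (hasDerivAt_moebius a b hx)
    have hderiv := hfactor.fun_smul hcomp
    have hsplit := iteratedDeriv_succ_affine_smul c d (n := n + 1)
      (contDiffAt_pow_smul_comp_moebius a b n hx hf)
    simp only [smul_smul, ← pow_succ'] at hsplit
    rw [hsplit, iteratedDeriv_succ, hlocal.deriv_eq, hderiv.deriv, hlocal.eq_of_nhds]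
    generalize a * d - b * c = D
    match_scalars
    · field_simp
      ring
    · field_simp
      ring

end MoebiusDerivatives

theorem integral_abs_cos_nat_mul_add {n : ℕ} (hn : n ≠ 0) (a : ℝ) :
    ∫ t in 0..2 * π, |Real.cos (n * t + a)| = 4 := by
  have hperiodic : Function.Periodic (fun t ↦ |Real.cos t|) π := fun t ↦ by
    simp only [Real.cos_add_pi, abs_neg]
  have hhalf : ∫ t in a..a + π, |Real.cos t| = 2 := by
    calc ∫ t in a..a + π, |Real.cos t|
      _ = ∫ t in -(π / 2)..-(π / 2) + π, |Real.cos t| := hperiodic.intervalIntegral_add_eq _ _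
      _ = ∫ t in -(π / 2)..π / 2, Real.cos t := by
        rw [show -(π / 2) + π = π / 2 by ring]
        refine intervalIntegral.integral_congr fun t ht ↦ ?_
        rw [uIcc_of_le (by linarith [pi_pos])] at ht
        exact abs_of_nonneg (Real.cos_nonneg_of_mem_Icc ht)
      _ = 2 := by rw [integral_cos, Real.sin_neg, Real.sin_pi_div_two]; norm_num
  have hfull : ∫ t in a..a + (2 * n : ℤ) • π, |Real.cos t| = 4 * n := by
    rw [hperiodic.intervalIntegral_add_zsmul_eq _ _ fun _ _ ↦
      Real.continuous_cos.abs.intervalIntegrable _ _, hhalf]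
    rw [zsmul_eq_mul]
    push_cast
    ring
  have hn' : (n : ℝ) ≠ 0 := Nat.cast_ne_zero.2 hn
  rw [intervalIntegral.integral_comp_mul_add (fun t ↦ |Real.cos t|) hn',
    show (n : ℝ) * 0 + a = a by ring,
    show n * (2 * π) + a = a + (2 * n : ℤ) • π by rw [zsmul_eq_mul]; push_cast; ring,
    hfull, smul_eq_mul]
  field_simp

theorem circleAverage_abs_re_mul_sub_pow (a c : ℂ) {R : ℝ} (hR : 0 ≤ R) {n : ℕ} (hn : n ≠ 0) :
    circleAverage (fun w ↦ |(a * (w - c) ^ n).re|) c R = 2 / π * ‖a‖ * R ^ n := by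
  have hre (t : ℝ) : (a * (circleMap c R t - c) ^ n).re =
      ‖a‖ * R ^ n * Real.cos (n * t + a.arg) := by
    have hpolar : a * (circleMap c R t - c) ^ n =
        (‖a‖ * R ^ n : ℝ) * exp ((n * t + a.arg : ℝ) * I) := by
      rw [circleMap_sub_center, circleMap_zero, mul_pow, ← Complex.exp_nat_mul]
      nth_rewrite 1 [← norm_mul_exp_arg_mul_I a]
      push_cast
      rw [add_mul, Complex.exp_add]
      ring_nf
    rw [hpolar, re_ofReal_mul, exp_ofReal_mul_I_re]
  simp only [circleAverage_def, hre, abs_mul, abs_norm, abs_pow, abs_of_nonneg hR,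
    intervalIntegral.integral_const_mul, integral_abs_cos_nat_mul_add hn, smul_eq_mul]
  field_simp
  ring

section CircleAverage

variable {f : ℂ → ℂ} {c : ℂ} {R : ℝ} {n : ℕ}

theorem circleAverage_re (hf : CircleIntegrable f c R) :
    circleAverage (fun w ↦ (f w).re) c R = (circleAverage f c R).re := by
  simpa [circleAverage_def] using
    congrArg ((2 * π)⁻¹ * ·) (reCLM.intervalIntegral_comp_comm hf)

theorem circleAverage_sub_pow_mul_eq_zero (hf : DiffContOnCl ℂ f (ball c R)) (hR : 0 ≤ R)
    (hn : n ≠ 0) : circleAverage (fun w ↦ (w - c) ^ n * f w) c R = 0 := by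
  have hprod : DiffContOnCl ℂ (fun w ↦ (w - c) ^ n * f w) (ball c |R|) := by
    rw [abs_of_nonneg hR]
    exact DiffContOnCl.smul (𝕜' := ℂ)
      (Differentiable.diffContOnCl (by fun_prop : Differentiable ℂ fun w ↦ (w - c) ^ n)) hf
  simpa [hn] using hprod.circleAverage

theorem circleAverage_inv_sub_pow_mul (hf : DiffContOnCl ℂ f (ball c R)) (hR : 0 < R) :
    circleAverage (fun w ↦ ((w - c) ^ n)⁻¹ * f w) c R = iteratedDeriv n f c / n.factorial := by
  have hcauchy := hf.circleIntegral_one_div_sub_center_pow_smul hR n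
  rw [circleAverage_eq_circleIntegral hR.ne']
  simp only [smul_eq_mul, one_div, pow_succ', mul_inv, mul_assoc] at hcauchy ⊢
  rw [hcauchy]
  have hI := I_ne_zero
  field_simp

theorem conj_sub_pow_of_mem_sphere {w : ℂ} (hw : w ∈ sphere c R) (hne : (w - c) ^ n ≠ 0) :
    conj ((w - c) ^ n) = R ^ (2 * n) * ((w - c) ^ n)⁻¹ := by
  rw [eq_mul_inv_iff_mul_eq₀ hne, conj_mul', norm_pow, mem_sphere_iff_norm.1 hw]
  push_cast
  ring

theorem circleAverage_re_mul_sub_pow_mul_re (hf : DiffContOnCl ℂ f (ball c R)) (hR : 0 < R)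
    (hn : n ≠ 0) (a : ℂ) :
    circleAverage (fun w ↦ (a * (w - c) ^ n).re * (f w).re) c R =
      R ^ (2 * n) / 2 * (conj a * (iteratedDeriv n f c / n.factorial)).re := by
  have hfc : ContinuousOn f (sphere c R) :=
    hf.continuousOn_ball.mono sphere_subset_closedBall
  have hne {w : ℂ} (hw : w ∈ sphere c R) : (w - c) ^ n ≠ 0 :=
    pow_ne_zero _ (sub_ne_zero.2 (ne_of_mem_sphere hw hR.ne'))
  have hpos : CircleIntegrable (fun w ↦ (a / 2) • ((w - c) ^ n * f w)) c R :=
    ContinuousOn.circleIntegrable hR.le (by fun_prop)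
  have hneg : CircleIntegrable
      (fun w ↦ (R ^ (2 * n) * conj a / 2) • (((w - c) ^ n)⁻¹ * f w)) c R :=
    ContinuousOn.circleIntegrable hR.le
      (ContinuousOn.fun_const_smul
        (ContinuousOn.fun_mul (ContinuousOn.inv₀ (by fun_prop) fun w hw ↦ hne hw) hfc) _)
  calc circleAverage (fun w ↦ (a * (w - c) ^ n).re * (f w).re) c R
    _ = circleAverage (fun w ↦ ((a / 2) • ((w - c) ^ n * f w) +
          (R ^ (2 * n) * conj a / 2) • (((w - c) ^ n)⁻¹ * f w)).re) c R := by
      refine circleAverage_congr_sphere fun w hw ↦ ?_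
      rw [abs_of_pos hR] at hw
      have htwo : (a / 2) • ((w - c) ^ n * f w) +
          (R ^ (2 * n) * conj a / 2) • (((w - c) ^ n)⁻¹ * f w) =
          ((a * (w - c) ^ n).re : ℂ) * f w := by
        rw [re_eq_add_conj, map_mul, conj_sub_pow_of_mem_sphere hw (hne hw), smul_eq_mul,
          smul_eq_mul]
        ring
      rw [htwo, re_ofReal_mul]
    _ = ((R ^ (2 * n) * conj a / 2) * (iteratedDeriv n f c / n.factorial)).re := by
      rw [circleAverage_re (hpos.fun_add hneg), circleAverage_fun_add hpos hneg,
        circleAverage_fun_smul, circleAverage_fun_smul,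
        circleAverage_sub_pow_mul_eq_zero hf hR.le hn, circleAverage_inv_sub_pow_mul hf hR,
        smul_zero, zero_add, smul_eq_mul]
    _ = R ^ (2 * n) / 2 * (conj a * (iteratedDeriv n f c / n.factorial)).re := by
      rw [← re_ofReal_mul]
      push_cast
      ring_nf

theorem circleAverage_re_mul_sub_pow_mul_le {u : ℂ → ℝ} {M : ℝ}
    (hu : ContinuousOn u (sphere c R)) (hR : 0 ≤ R) (hn : n ≠ 0)
    (hM : ∀ w ∈ sphere c R, |u w| ≤ M) (a : ℂ) :
    circleAverage (fun w ↦ (a * (w - c) ^ n).re * u w) c R ≤ M * (2 / π * ‖a‖ * R ^ n) := by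
  calc circleAverage (fun w ↦ (a * (w - c) ^ n).re * u w) c R
    _ ≤ circleAverage (fun w ↦ M • |(a * (w - c) ^ n).re|) c R := by
      refine circleAverage_mono (ContinuousOn.circleIntegrable hR (by fun_prop))
        (ContinuousOn.circleIntegrable hR (by fun_prop)) fun w hw ↦ ?_
      rw [abs_of_nonneg hR] at hw
      calc (a * (w - c) ^ n).re * u w
        _ ≤ |(a * (w - c) ^ n).re| * |u w| := (le_abs_self _).trans_eq (abs_mul _ _)
        _ ≤ |(a * (w - c) ^ n).re| * M := by gcongr; exact hM w hw
        _ = M • |(a * (w - c) ^ n).re| := mul_comm _ _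
    _ = M * (2 / π * ‖a‖ * R ^ n) := by
      rw [circleAverage_fun_smul, circleAverage_abs_re_mul_sub_pow a c hR hn, smul_eq_mul]

theorem norm_iteratedDeriv_le_of_forall_mem_sphere_abs_re_le {M : ℝ}
    (hf : DiffContOnCl ℂ f (ball c R)) (hR : 0 < R) (hn : n ≠ 0)
    (hM : ∀ w ∈ sphere c R, |(f w).re| ≤ M) :
    ‖iteratedDeriv n f c‖ ≤ 4 / π * n.factorial * M / R ^ n := by
  set A := iteratedDeriv n f c with hA
  have hre : ContinuousOn (fun w ↦ (f w).re) (sphere c R) :=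
    continuous_re.comp_continuousOn (hf.continuousOn_ball.mono sphere_subset_closedBall)
  have hconj : conj A * (A / n.factorial) = (‖A‖ ^ 2 / n.factorial : ℝ) := by
    rw [← mul_div_assoc, conj_mul']
    push_cast
    rfl
  have hkey : R ^ (2 * n) / 2 * (‖A‖ ^ 2 / n.factorial) ≤ M * (2 / π * ‖A‖ * R ^ n) := by
    have haverage := circleAverage_re_mul_sub_pow_mul_le hre hR.le hn hM A
    rwa [circleAverage_re_mul_sub_pow_mul_re hf hR hn, ← hA, hconj, ofReal_re] at haverage
  rcases (norm_nonneg A).eq_or_lt with hA0 | hA0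
  · have hM0 : 0 ≤ M :=
      (abs_nonneg _).trans (hM (circleMap c R 0) (circleMap_mem_sphere c hR.le 0))
    rw [← hA0]
    positivity
  · have hscale : 0 < R ^ n * ‖A‖ / (2 * n.factorial) := by positivity
    rw [le_div_iff₀ (by positivity)]
    refine le_of_mul_le_mul_left ?_ hscale
    calc R ^ n * ‖A‖ / (2 * n.factorial) * (‖A‖ * R ^ n)
      _ = R ^ (2 * n) / 2 * (‖A‖ ^ 2 / n.factorial) := by ring
      _ ≤ M * (2 / π * ‖A‖ * R ^ n) := hkey
      _ = R ^ n * ‖A‖ / (2 * n.factorial) * (4 / π * n.factorial * M) := by field_simp; ring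

theorem norm_iteratedDeriv_le_of_forall_mem_ball_abs_re_le {M : ℝ}
    (hf : DifferentiableOn ℂ f (ball c R)) (hR : 0 < R) (hn : n ≠ 0)
    (hM : ∀ w ∈ ball c R, |(f w).re| ≤ M) :
    ‖iteratedDeriv n f c‖ ≤ 4 / π * n.factorial * M / R ^ n := by
  have hlim : Tendsto (fun r : ℝ ↦ 4 / π * n.factorial * M / r ^ n) (𝓝[<] R)
      (𝓝 (4 / π * n.factorial * M / R ^ n)) :=
    (ContinuousAt.div (by fun_prop) (by fun_prop) (by positivity)).mono_left nhdsWithin_le_nhds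
  refine ge_of_tendsto hlim ?_
  filter_upwards [Ioo_mem_nhdsLT hR] with r hr
  exact norm_iteratedDeriv_le_of_forall_mem_sphere_abs_re_le
    (hf.diffContOnCl_ball (closedBall_subset_ball hr.2)) hr.1 hn
    fun w hw ↦ hM w (sphere_subset_ball hr.2 hw)

end CircleAverage

theorem iteratedDeriv_mul_add_one_pow_zero {𝕜 : Type*} [NontriviallyNormedField 𝕜] (c : 𝕜)
    (n k : ℕ) : iteratedDeriv k (fun t ↦ (c * t + 1) ^ n) 0 = n.descFactorial k * c ^ k := by
  have hshift : iteratedDeriv k (fun t : 𝕜 ↦ (t + 1) ^ n) =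
      fun t ↦ (n.descFactorial k : 𝕜) * (t + 1) ^ (n - k) := by
    simp only [iteratedDeriv_comp_add_const k (fun t : 𝕜 ↦ t ^ n), iteratedDeriv_pow]
  rw [iteratedDeriv_comp_const_mul (f := fun s ↦ (s + 1) ^ n) (by fun_prop) c, hshift]
  simp [mul_comm]

theorem choose_succ_mul_descFactorial_mul_factorial {n k : ℕ} (hk : k ≤ n) :
    (n + 1).choose k * n.descFactorial k * (n + 1 - k).factorial =
      (n + 1).factorial * n.choose k := by
  rw [Nat.descFactorial_eq_factorial_mul_choose, ← Nat.choose_mul_factorial_mul_factorial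
    (hk.trans n.le_succ)]
  ring

theorem norm_iteratedDeriv_mul_add_one_pow_mul_zero_le {𝕜 : Type*} [NontriviallyNormedField 𝕜]
    {f : 𝕜 → 𝕜} {n : ℕ} {C : ℝ} (c : 𝕜) (hf : ContDiffAt 𝕜 (n + 1 : ℕ) f 0)
    (hC : ∀ k ≠ 0, ‖iteratedDeriv k f 0‖ ≤ C * k.factorial) :
    ‖iteratedDeriv (n + 1) (fun t ↦ (c * t + 1) ^ n * f t) 0‖ ≤
      C * (n + 1).factorial * (1 + ‖c‖) ^ n := by
  rw [iteratedDeriv_fun_mul (by fun_prop) hf, Finset.sum_range_succ]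
  simp only [iteratedDeriv_mul_add_one_pow_zero, Nat.descFactorial_succ, Nat.sub_self, zero_mul,
    Nat.cast_zero, mul_zero, add_zero]
  calc _ ≤ ∑ k ∈ Finset.range (n + 1), C * (n + 1).factorial * (‖c‖ ^ k * n.choose k) := by
        refine norm_sum_le_of_le _ fun k hk ↦ ?_
        have hkn : k ≤ n := Finset.mem_range_succ_iff.1 hk
        have hcoeff : ((n + 1).choose k * n.descFactorial k * (n + 1 - k).factorial : ℝ) =
            (n + 1).factorial * n.choose k := by
          exact_mod_cast choose_succ_mul_descFactorial_mul_factorial hkn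
        calc ‖((n + 1).choose k : 𝕜) * (n.descFactorial k * c ^ k) *
              iteratedDeriv (n + 1 - k) f 0‖
          _ ≤ (n + 1).choose k * (n.descFactorial k * ‖c‖ ^ k) *
              (C * (n + 1 - k).factorial) := by
            simp only [norm_mul, norm_pow]
            gcongr
            · simpa using Nat.norm_cast_le (α := 𝕜) ((n + 1).choose k)
            · simpa using Nat.norm_cast_le (α := 𝕜) (n.descFactorial k)
            · exact hC _ (by omega)
          _ = C * (n + 1).factorial * (‖c‖ ^ k * n.choose k) := by
            linear_combination C * ‖c‖ ^ k * hcoeff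
    _ = C * (n + 1).factorial * (1 + ‖c‖) ^ n := by
      rw [← Finset.mul_sum, add_comm 1, add_pow]
      simp

theorem mul_add_one_ne_zero {𝕜 : Type*} [NormedField 𝕜] {c ζ : 𝕜} (hc : ‖c‖ < 1) (hζ : ‖ζ‖ < 1) :
    c * ζ + 1 ≠ 0 := by
  intro h
  have hnorm : ‖c‖ * ‖ζ‖ = 1 := by
    rw [← norm_mul, eq_neg_of_add_eq_zero_left h, norm_neg, norm_one]
  exact (mul_lt_one_of_nonneg_of_lt_one_left (norm_nonneg c) hc hζ.le).ne hnorm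

theorem norm_add_div_conj_mul_add_one_lt_one {z ζ : ℂ} (hz : ‖z‖ < 1) (hζ : ‖ζ‖ < 1) :
    ‖(ζ + z) / (conj z * ζ + 1)‖ < 1 := by
  have hden : conj z * ζ + 1 ≠ 0 := mul_add_one_ne_zero (by rwa [norm_conj]) hζ
  rw [norm_div, div_lt_one (norm_pos_iff.2 hden), ← sq_lt_sq₀ (norm_nonneg _) (norm_nonneg _)]
  have hidentity : ‖conj z * ζ + 1‖ ^ 2 - ‖ζ + z‖ ^ 2 = (1 - ‖z‖ ^ 2) * (1 - ‖ζ‖ ^ 2) := by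
    simp only [Complex.sq_norm, normSq_apply, add_re, add_im, mul_re, mul_im, conj_re,
      conj_im, one_re, one_im]
    ring
  have hz2 : ‖z‖ ^ 2 < 1 := pow_lt_one₀ (norm_nonneg z) hz two_ne_zero
  have hζ2 : ‖ζ‖ ^ 2 < 1 := pow_lt_one₀ (norm_nonneg ζ) hζ two_ne_zero
  linarith [mul_pos (sub_pos.2 hz2) (sub_pos.2 hζ2)]

theorem differentiableOn_comp_add_div_conj_mul_add_one {f : ℂ → ℂ} {z : ℂ}
    (hf : DifferentiableOn ℂ f (ball 0 1)) (hz : ‖z‖ < 1) :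
    DifferentiableOn ℂ (fun ζ ↦ f ((ζ + z) / (conj z * ζ + 1))) (ball 0 1) := by
  refine hf.comp (DifferentiableOn.div (by fun_prop) (by fun_prop) fun ζ hζ ↦ ?_) fun ζ hζ ↦ ?_
  · exact mul_add_one_ne_zero (by rwa [norm_conj]) (mem_ball_zero_iff.1 hζ)
  · exact mem_ball_zero_iff.2 <|
      norm_add_div_conj_mul_add_one_lt_one hz (mem_ball_zero_iff.1 hζ)

theorem norm_iteratedDeriv_succ_le_of_forall_mem_unitBall_abs_re_le {f : ℂ → ℂ} {M : ℝ} {z : ℂ}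
    (n : ℕ) (hf : DifferentiableOn ℂ f (ball 0 1)) (hM : ∀ w ∈ ball 0 1, |(f w).re| ≤ M)
    (hz : ‖z‖ < 1) :
    ‖iteratedDeriv (n + 1) f z‖ ≤
      4 / π * M * (n + 1).factorial * (1 + ‖z‖) ^ n / (1 - ‖z‖ ^ 2) ^ (n + 1) := by
  set F : ℂ → ℂ := fun ζ ↦ f ((ζ + z) / (conj z * ζ + 1)) with hF
  have hFdiff : DifferentiableOn ℂ F (ball 0 1) :=
    differentiableOn_comp_add_div_conj_mul_add_one hf hz
  have hFM : ∀ ζ ∈ ball 0 1, |(F ζ).re| ≤ M := fun ζ hζ ↦ hM _ <| mem_ball_zero_iff.2 <|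
    norm_add_div_conj_mul_add_one_lt_one hz (mem_ball_zero_iff.1 hζ)
  have hFderiv (k : ℕ) (hk : k ≠ 0) : ‖iteratedDeriv k F 0‖ ≤ 4 / π * M * k.factorial := by
    simpa [mul_right_comm] using
      norm_iteratedDeriv_le_of_forall_mem_ball_abs_re_le hFdiff one_pos hk hFM
  have hgap : 0 < 1 - ‖z‖ ^ 2 := sub_pos.2 (pow_lt_one₀ (norm_nonneg z) hz two_ne_zero)
  have hbol : iteratedDeriv (n + 1) (fun ζ ↦ (conj z * ζ + 1) ^ n * F ζ) 0 =
      (1 - ‖z‖ ^ 2 : ℝ) ^ (n + 1) * iteratedDeriv (n + 1) f z := by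
    have hfz : ContDiffAt ℂ (n + 1 : ℕ) f z :=
      (hf.analyticAt (isOpen_ball.mem_nhds (mem_ball_zero_iff.2 hz))).contDiffAt
    simpa [hF, mul_conj'] using iteratedDeriv_pow_smul_comp_moebius (n := n) (x := 0) (f := f)
      1 z (c := conj z) (d := 1) (by simp) (by simpa using hfz)
  have hF0 : ContDiffAt ℂ (n + 1 : ℕ) F 0 :=
    (hFdiff.analyticAt (ball_mem_nhds 0 one_pos)).contDiffAt
  rw [le_div_iff₀' (pow_pos hgap _)]
  calc (1 - ‖z‖ ^ 2) ^ (n + 1) * ‖iteratedDeriv (n + 1) f z‖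
    _ = ‖iteratedDeriv (n + 1) (fun ζ ↦ (conj z * ζ + 1) ^ n * F ζ) 0‖ := by
      rw [hbol, norm_mul, norm_pow, norm_real, norm_of_nonneg hgap.le]
    _ ≤ 4 / π * M * (n + 1).factorial * (1 + ‖conj z‖) ^ n :=
      norm_iteratedDeriv_mul_add_one_pow_mul_zero_le _ hF0 hFderiv
    _ = 4 / π * M * (n + 1).factorial * (1 + ‖z‖) ^ n := by rw [norm_conj]

theorem re_mul_add_conj_mul (u z w : ℂ) : (u * z + conj u * w).re = (u * (z + conj w)).re := by
  simp only [add_re, mul_re, add_im, conj_re, conj_im]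
  ring

theorem exists_norm_eq_one_norm_mul_add_conj_mul (z w : ℂ) :
    ∃ u : ℂ, ‖u‖ = 1 ∧ ‖u * z + conj u * w‖ = ‖z‖ + ‖w‖ := by
  obtain ⟨θ, hθ⟩ : ∃ θ : ℝ, θ = (w.arg - z.arg) / 2 := ⟨_, rfl⟩
  refine ⟨exp (θ * I), norm_exp_ofReal_mul_I θ, ?_⟩
  have hphase : exp (θ * I) * z + conj (exp (θ * I)) * w =
      (‖z‖ + ‖w‖ : ℝ) * exp (((z.arg + w.arg) / 2 : ℝ) * I) := by
    nth_rewrite 1 [← norm_mul_exp_arg_mul_I z, ← norm_mul_exp_arg_mul_I w]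
    rw [← Complex.exp_conj, map_mul, conj_ofReal, conj_I, mul_left_comm, mul_left_comm _ (‖w‖ : ℂ),
      ← Complex.exp_add, ← Complex.exp_add, hθ]
    push_cast
    ring_nf
  rw [hphase, norm_mul, norm_exp_ofReal_mul_I, mul_one, norm_real, norm_of_nonneg (by positivity)]

theorem stmt9 (f h g : ℂ → ℂ)
    (hh : DifferentiableOn ℂ h (Metric.ball 0 1))
    (hg : DifferentiableOn ℂ g (Metric.ball 0 1))
    (hg0 : g 0 = 0)
    (hfd : ∀ z ∈ Metric.ball (0 : ℂ) 1, f z = h z + (starRingEnd ℂ) (g z))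
    (hmap : ∀ z ∈ Metric.ball (0 : ℂ) 1, ‖f z‖ < 1)
    (z : ℂ) (hz : ‖z‖ < 1) (m : ℕ) (hm : 1 ≤ m) :
    -- `∂^m f/∂z^m = h^{(m)}` and `|∂^m f/∂z̄^m| = |g^{(m)}|`
    ‖iteratedDeriv m h z‖ + ‖iteratedDeriv m g z‖ ≤
      (4 / Real.pi) * (m.factorial : ℝ) * (1 + ‖z‖) ^ (m - 1) / (1 - ‖z‖ ^ 2) ^ m := by
  obtain ⟨n, rfl⟩ := Nat.exists_eq_add_of_le' hm
  obtain ⟨u, hu, hsum⟩ := exists_norm_eq_one_norm_mul_add_conj_mul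
    (iteratedDeriv (n + 1) h z) (iteratedDeriv (n + 1) g z)
  have hcontDiff {k : ℂ → ℂ} (hk : DifferentiableOn ℂ k (ball 0 1)) :
      ContDiffAt ℂ (n + 1 : ℕ) k z :=
    (hk.analyticAt (isOpen_ball.mem_nhds (mem_ball_zero_iff.2 hz))).contDiffAt
  have hderiv : iteratedDeriv (n + 1) (fun w ↦ u * h w + conj u * g w) z =
      u * iteratedDeriv (n + 1) h z + conj u * iteratedDeriv (n + 1) g z := by
    rw [iteratedDeriv_fun_add (contDiffAt_const.mul (hcontDiff hh))
      (contDiffAt_const.mul (hcontDiff hg)), iteratedDeriv_const_mul_field,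
      iteratedDeriv_const_mul_field]
  have hre (w : ℂ) (hw : w ∈ ball 0 1) : |(u * h w + conj u * g w).re| ≤ 1 := by
    calc |(u * h w + conj u * g w).re|
      _ = |(u * f w).re| := by rw [re_mul_add_conj_mul, hfd w hw]
      _ ≤ ‖u * f w‖ := abs_re_le_norm _
      _ ≤ 1 := by rw [norm_mul, hu, one_mul]; exact (hmap w hw).le
  rw [← hsum, ← hderiv]
  simpa using norm_iteratedDeriv_succ_le_of_forall_mem_unitBall_abs_re_le n
    ((hh.const_mul u).fun_add (hg.const_mul (conj u))) hre hz
end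

section
/- Let n ≥ 2 and let f be a pluriharmonic function of 𝔹_{ℓ₂ⁿ} into the unit disk 𝔻. Then for every z ∈ 𝔹_{ℓ₂ⁿ} and every nonzero multi-index m = (m₁,…,m_n), |∂^{|m|} f(z)/∂z₁^{m₁}⋯∂z_n^{m_n}| + |∂^{|m|} f(z)/∂z̄₁^{m₁}⋯∂z̄_n^{m_n}| ≤ (4/π) n^{|m|/2} · C(n+|m|−1, n−1) · |m|! · ∏_{j=1}^{n} (1 + |z_j|)^{m_j} / (1 − ‖z‖₂²)^{|m|}, where C(·,·) is the binomial coefficient. -/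
open scoped BigOperators

/-- The Wirtinger partial derivative `∂/∂z_k` of a holomorphic function
on a domain in `ℂ^n` (with the Euclidean norm). -/
noncomputable def wpderiv {n : ℕ} (k : Fin n) (h : EuclideanSpace ℂ (Fin n) → ℂ) :
    EuclideanSpace ℂ (Fin n) → ℂ :=
  fun z => fderiv ℂ h z (EuclideanSpace.single k 1)

/-- The iterated Wirtinger derivative `∂^{|m|}/∂z₁^{m₁}⋯∂z_n^{m_n}`. -/
noncomputable def wpderivMulti {n : ℕ} (m : Fin n → ℕ)
    (h : EuclideanSpace ℂ (Fin n) → ℂ) : EuclideanSpace ℂ (Fin n) → ℂ :=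
  Fin.foldr n (fun k F => (wpderiv k)^[m k] F) h

/-!
If `|Re φ| ≤ M` on a circle of radius `r`, then for `k ≥ 1` the conjugate of `φ` has no `k`-th
Fourier coefficient there, so the `k`-th Taylor coefficient of `φ` can be read off from `Re φ`
alone; since `|cos|` has mean `2 / π`, it is at most `(4 / π) M / r ^ k`.

For `f = h + conj g` choose a unimodular `u` with `|u ∂h + ū ∂g| = |∂h| + |∂g|` at `z`. The
function `H = u h + ū g` is holomorphic with `Re H = Re (u f)`, hence `|Re H| ≤ 1`. Using the
one-variable estimate in one coordinate and Cauchy's estimates in the others on a polydisc of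
polyradius `r` about `z` bounds `|∂H(z)|` by `(4 / π) ∏ m_j! / r_j ^ m_j`.

With `r_j = (1 - ‖z‖²) m_j / (|m| √n (1 + |z_j|))` the polydisc stays inside the unit ball, and the
remaining factor `|m| ^ |m| ∏ m_j! / m_j ^ m_j` is at most `C(n + |m| - 1, n - 1) |m|!`: the
multinomial expansion of `(m₁ + ⋯ + m_n) ^ |m|` has `C(n + |m| - 1, n - 1)` terms, the largest of
which is the one with exponent `m`.
-/

section Multinomial

open Finset
open scoped Nat

lemma factorial_mul_pow_le (m k : ℕ) : m ! * m ^ k ≤ m ^ m * k ! := by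
  rcases le_total m k with h | h
  · calc m ! * m ^ k = m ^ m * (m ! * m ^ (k - m)) := by
          rw [mul_left_comm, ← pow_add, Nat.add_sub_cancel' h]
      _ ≤ m ^ m * k ! := Nat.mul_le_mul_left _ (Nat.factorial_mul_pow_sub_le_factorial h)
  · have hdesc : m ! ≤ k ! * m ^ (m - k) := by
      rw [← Nat.factorial_mul_descFactorial (Nat.sub_le m k), Nat.sub_sub_self h]
      exact Nat.mul_le_mul_left _ (Nat.descFactorial_le_pow m _)
    calc m ! * m ^ k ≤ k ! * m ^ (m - k) * m ^ k := Nat.mul_le_mul_right _ hdesc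
      _ = m ^ m * k ! := by rw [mul_assoc, ← pow_add, Nat.sub_add_cancel h, mul_comm]

variable {ι : Type*}

lemma card_piAntidiag_eq_multichoose [DecidableEq ι] (s : Finset ι) (N : ℕ) :
    #(piAntidiag s N) = (#s).multichoose N := by
  rw [← card_finsuppAntidiag_nat_eq_multichoose, finsuppAntidiag, card_map, card_attach]

lemma multinomial_mul_prod_pow_le {s : Finset ι} {m k : ι → ℕ}
    (h : ∑ i ∈ s, k i = ∑ i ∈ s, m i) :
    Nat.multinomial s k * ∏ i ∈ s, m i ^ k i ≤ Nat.multinomial s m * ∏ i ∈ s, m i ^ m i := by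
  refine Nat.le_of_mul_le_mul_left ?_ (prod_pos fun i _ ↦ (m i).factorial_pos : 0 < ∏ i ∈ s, (m i)!)
  calc (∏ i ∈ s, (m i)!) * (Nat.multinomial s k * ∏ i ∈ s, m i ^ k i)
      = Nat.multinomial s k * ∏ i ∈ s, (m i)! * m i ^ k i := by rw [prod_mul_distrib]; ring
    _ ≤ Nat.multinomial s k * ∏ i ∈ s, m i ^ m i * (k i)! :=
        Nat.mul_le_mul_left _ (prod_le_prod' fun i _ ↦ factorial_mul_pow_le (m i) (k i))
    _ = (∏ i ∈ s, (k i)!) * Nat.multinomial s k * ∏ i ∈ s, m i ^ m i := by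
        rw [prod_mul_distrib]; ring
    _ = (∏ i ∈ s, (m i)!) * (Nat.multinomial s m * ∏ i ∈ s, m i ^ m i) := by
        rw [Nat.multinomial_spec, h, ← Nat.multinomial_spec s m, mul_assoc]

lemma sum_pow_sum_le_multichoose_mul (s : Finset ι) (m : ι → ℕ) :
    (∑ i ∈ s, m i) ^ (∑ i ∈ s, m i) ≤
      (#s).multichoose (∑ i ∈ s, m i) * (Nat.multinomial s m * ∏ i ∈ s, m i ^ m i) := by
  classical
  rw [sum_pow_eq_sum_piAntidiag, ← card_piAntidiag_eq_multichoose]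
  exact sum_le_card_nsmul _ _ _ fun k hk ↦ multinomial_mul_prod_pow_le (mem_piAntidiag.1 hk).1

lemma sum_pow_sum_mul_prod_factorial_le (s : Finset ι) (m : ι → ℕ) :
    (∑ i ∈ s, m i) ^ (∑ i ∈ s, m i) * ∏ i ∈ s, (m i)! ≤
      (#s).multichoose (∑ i ∈ s, m i) * (∑ i ∈ s, m i)! * ∏ i ∈ s, m i ^ m i := by
  refine (Nat.mul_le_mul_right _ (sum_pow_sum_le_multichoose_mul s m)).trans_eq ?_
  rw [← Nat.multinomial_spec s m]
  ring

end Multinomial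

section RealPartEstimate

open Complex MeasureTheory Metric
open scoped ComplexConjugate Nat Real

lemma periodic_abs_cos : Function.Periodic (fun x : ℝ ↦ |Real.cos x|) π := fun x ↦ by
  simp only [Real.cos_add_pi, abs_neg]

lemma integral_abs_cos_add_pi (a : ℝ) : ∫ x in a..a + π, |Real.cos x| = 2 := by
  have hcongr : ∫ x in (-(π / 2))..(π / 2), |Real.cos x| =
      ∫ x in (-(π / 2))..(π / 2), Real.cos x :=
    intervalIntegral.integral_congr fun x hx ↦ abs_of_nonneg <| Real.cos_nonneg_of_mem_Icc <| by
      rwa [Set.uIcc_of_le (by linarith [Real.pi_pos])] at hx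
  rw [periodic_abs_cos.intervalIntegral_add_eq a (-(π / 2)), show -(π / 2) + π = π / 2 by ring,
    hcongr, integral_cos, Real.sin_neg, Real.sin_pi_div_two]
  norm_num

lemma integral_abs_cos_nat_mul_sub {k : ℕ} (hk : k ≠ 0) (α : ℝ) :
    ∫ θ in (0 : ℝ)..2 * π, |Real.cos (k * θ - α)| = 4 := by
  have hk' : (k : ℝ) ≠ 0 := Nat.cast_ne_zero.2 hk
  have hend : (k : ℝ) * (2 * π) - α = k * 0 - α + (2 * k : ℤ) • π := by
    rw [zsmul_eq_mul]; push_cast; ring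
  rw [intervalIntegral.integral_comp_mul_sub (fun x ↦ |Real.cos x|) hk', hend,
    periodic_abs_cos.intervalIntegral_add_zsmul_eq _ _ fun a b ↦
      (Real.continuous_cos.abs.intervalIntegrable a b),
    integral_abs_cos_add_pi, zsmul_eq_mul, smul_eq_mul]
  push_cast
  field_simp
  norm_num

lemma norm_integral_exp_neg_mul_ofReal_le {k : ℕ} (hk : k ≠ 0) {u : ℝ → ℝ} {M : ℝ}
    (hu : Continuous u) (hM : ∀ θ, |u θ| ≤ M) :
    ‖∫ θ in (0 : ℝ)..2 * π, cexp (-(k * θ * I)) * u θ‖ ≤ 4 * M := by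
  set J := ∫ θ in (0 : ℝ)..2 * π, cexp (-(k * θ * I)) * u θ with hJ
  have hrotate : (‖J‖ : ℂ) = cexp (-(J.arg * I)) * J := by
    nth_rw 3 [← norm_mul_exp_arg_mul_I J]
    rw [mul_left_comm, ← Complex.exp_add, neg_add_cancel, Complex.exp_zero, mul_one]
  have hre : ∀ θ : ℝ, (cexp (-(J.arg * I)) * (cexp (-(k * θ * I)) * u θ)).re =
      Real.cos (k * θ - -J.arg) * u θ := fun θ ↦ by
    rw [← mul_assoc, ← Complex.exp_add, re_mul_ofReal, ← Real.cos_neg, ← exp_ofReal_mul_I_re]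
    congr 3
    push_cast
    ring
  calc ‖J‖ = (∫ θ in (0 : ℝ)..2 * π, cexp (-(J.arg * I)) * (cexp (-(k * θ * I)) * u θ)).re := by
        rw [intervalIntegral.integral_const_mul, ← hJ, ← hrotate, ofReal_re]
    _ = ∫ θ in (0 : ℝ)..2 * π, Real.cos (k * θ - -J.arg) * u θ := by
        simp_rw [← hre]
        exact (reCLM.intervalIntegral_comp_comm
          (Continuous.intervalIntegrable (by fun_prop) _ _)).symm
    _ ≤ ∫ θ in (0 : ℝ)..2 * π, |Real.cos (k * θ - -J.arg)| * M := by
        refine intervalIntegral.integral_mono (by positivity)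
          (Continuous.intervalIntegrable (by fun_prop) _ _)
          (Continuous.intervalIntegrable (by fun_prop) _ _) fun θ ↦ ?_
        exact (le_abs_self _).trans ((abs_mul _ _).trans_le (by gcongr; exact hM θ))
    _ = 4 * M := by
        rw [intervalIntegral.integral_mul_const, integral_abs_cos_nat_mul_sub hk]

variable {f : ℂ → ℂ} {c : ℂ} {r : ℝ}

lemma integral_exp_neg_mul_circleMap (hr : 0 < r) (hf : DiffContOnCl ℂ f (ball c r)) (k : ℕ) :
    ∫ θ in (0 : ℝ)..2 * π, cexp (-(k * θ * I)) * f (circleMap c r θ) =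
      2 * π * (r ^ k * iteratedDeriv k f c / k !) := by
  have hcauchy := hf.circleIntegral_one_div_sub_center_pow_smul hr k
  have hintegrand : ∀ θ : ℝ, deriv (circleMap c r) θ • (1 / (circleMap c r θ - c) ^ (k + 1)) •
      f (circleMap c r θ) = I / r ^ k * (cexp (-(k * θ * I)) * f (circleMap c r θ)) := fun θ ↦ by
    have hr0 : (r : ℂ) ≠ 0 := ofReal_ne_zero.2 hr.ne'
    have hexp := Complex.exp_ne_zero (θ * I)
    rw [deriv_circleMap, circleMap_sub_center, circleMap_zero, mul_assoc (k : ℂ), Complex.exp_neg,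
      Complex.exp_nat_mul, smul_eq_mul, smul_eq_mul]
    field_simp
    ring
  simp_rw [circleIntegral, hintegrand, intervalIntegral.integral_const_mul, smul_eq_mul] at hcauchy
  have hr0 : (r : ℂ) ^ k ≠ 0 := pow_ne_zero k (ofReal_ne_zero.2 hr.ne')
  have hfact : (k ! : ℂ) ≠ 0 := Nat.cast_ne_zero.2 k.factorial_ne_zero
  have hI := I_ne_zero
  field_simp at hcauchy ⊢
  linear_combination hcauchy

lemma integral_exp_mul_circleMap_eq_zero (hr : 0 < r) (hf : DiffContOnCl ℂ f (ball c r)) {k : ℕ}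
    (hk : k ≠ 0) : ∫ θ in (0 : ℝ)..2 * π, cexp (k * θ * I) * f (circleMap c r θ) = 0 := by
  obtain ⟨l, rfl⟩ := Nat.exists_eq_succ_of_ne_zero hk
  have hpow : Differentiable ℂ fun z : ℂ ↦ (z - c) ^ l := by fun_prop
  have hcauchy := (hpow.diffContOnCl.smul hf).circleIntegral_eq_zero hr.le
  have hintegrand : ∀ θ : ℝ, deriv (circleMap c r) θ • (circleMap c r θ - c) ^ l •
      f (circleMap c r θ) =
        I * r ^ (l + 1) * (cexp ((l + 1 : ℕ) * θ * I) * f (circleMap c r θ)) := fun θ ↦ by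
    rw [deriv_circleMap, circleMap_sub_center, circleMap_zero, mul_assoc ((l + 1 : ℕ) : ℂ),
      Complex.exp_nat_mul, smul_eq_mul, smul_eq_mul]
    ring
  simp_rw [circleIntegral, hintegrand, intervalIntegral.integral_const_mul] at hcauchy
  have hr0 : (r : ℂ) ≠ 0 := ofReal_ne_zero.2 hr.ne'
  exact (mul_eq_zero.1 hcauchy).resolve_left (mul_ne_zero I_ne_zero (pow_ne_zero _ hr0))

lemma integral_exp_neg_mul_re_circleMap (hr : 0 < r) (hf : DiffContOnCl ℂ f (ball c r)) {k : ℕ}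
    (hk : k ≠ 0) : ∫ θ in (0 : ℝ)..2 * π, cexp (-(k * θ * I)) * (f (circleMap c r θ)).re =
      π * (r ^ k * iteratedDeriv k f c / k !) := by
  have hcont : Continuous fun θ : ℝ ↦ f (circleMap c r θ) := hf.continuousOn_ball.comp_continuous
    (continuous_circleMap c r) (circleMap_mem_closedBall c hr.le)
  have hexp : Continuous fun θ : ℝ ↦ cexp (-(k * θ * I)) := by fun_prop
  have hconj : ∫ θ in (0 : ℝ)..2 * π, cexp (-(k * θ * I)) * conj (f (circleMap c r θ)) = 0 := by
    have hzero := congrArg conj (integral_exp_mul_circleMap_eq_zero hr hf hk)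
    simpa [← intervalIntegral.intervalIntegral_conj, ← exp_conj] using hzero
  have hre : ∀ θ : ℝ, cexp (-(k * θ * I)) * ((f (circleMap c r θ)).re : ℂ) =
      2⁻¹ * (cexp (-(k * θ * I)) * f (circleMap c r θ) +
        cexp (-(k * θ * I)) * conj (f (circleMap c r θ))) := fun θ ↦ by
    rw [re_eq_add_conj]; ring
  simp_rw [hre]
  rw [intervalIntegral.integral_const_mul, intervalIntegral.integral_add
    (Continuous.intervalIntegrable (by exact hexp.mul hcont) _ _)
    (Continuous.intervalIntegrable (by exact hexp.mul (continuous_conj.comp hcont)) _ _), hconj,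
    integral_exp_neg_mul_circleMap hr hf]
  ring

theorem norm_iteratedDeriv_le_of_abs_re_le (hr : 0 < r) (hf : DiffContOnCl ℂ f (ball c r)) {k : ℕ}
    (hk : k ≠ 0) {M : ℝ} (hM : ∀ z ∈ sphere c r, |(f z).re| ≤ M) :
    ‖iteratedDeriv k f c‖ ≤ k ! * (4 / π * M) / r ^ k := by
  have hcont : Continuous fun θ : ℝ ↦ f (circleMap c r θ) := hf.continuousOn_ball.comp_continuous
    (continuous_circleMap c r) (circleMap_mem_closedBall c hr.le)
  have hcoeff := norm_integral_exp_neg_mul_ofReal_le hk (continuous_re.comp hcont)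
    fun θ ↦ hM _ (circleMap_mem_sphere c hr.le θ)
  simp only [Function.comp_apply, integral_exp_neg_mul_re_circleMap hr hf hk, norm_mul, norm_div,
    norm_pow, norm_real, norm_natCast, Real.norm_of_nonneg hr.le,
    Real.norm_of_nonneg Real.pi_pos.le] at hcoeff
  field_simp at hcoeff ⊢
  linarith

end RealPartEstimate

section DirectionalDerivative

open Metric Set MeasureTheory
open scoped Topology

lemma add_mem_ball_two_mul {E : Type*} [SeminormedAddCommGroup E] {x y v : E} {R : ℝ}
    (hy : y ∈ ball x R) (hv : ‖v‖ < R) : y + v ∈ ball x (2 * R) := by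
  rw [mem_ball_iff_norm] at *
  calc ‖y + v - x‖ = ‖(y - x) + v‖ := by rw [add_sub_right_comm]
    _ < 2 * R := (norm_add_le _ _).trans_lt (by linarith)

variable {E F : Type*} [NormedAddCommGroup E] [NormedSpace ℂ E] [NormedAddCommGroup F]
  [NormedSpace ℂ F] {U : Set E} {f : E → F} {x v : E} {R K ρ : ℝ}

lemma exists_ball_two_mul_norm_fderiv_le (hU : IsOpen U) (hf : DifferentiableOn ℂ f U)
    (hx : x ∈ U) : ∃ R > 0, ∃ K, ball x (2 * R) ⊆ U ∧ ∀ y ∈ ball x (2 * R), ‖fderiv ℂ f y‖ ≤ K := by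
  have hnhds : U ∩ f ⁻¹' ball (f x) 1 ∈ 𝓝 x := Filter.inter_mem (hU.mem_nhds hx)
    ((hf.continuousOn.continuousAt (hU.mem_nhds hx)).preimage_mem_nhds (ball_mem_nhds _ one_pos))
  obtain ⟨r, hr, hball⟩ := Metric.mem_nhds_iff.1 hnhds
  have hR : 0 < r / 4 := by positivity
  refine ⟨r / 4, hR, 2 / (r / 4),
    fun y hy ↦ (hball (ball_subset_ball (by linarith) hy)).1, fun y hy ↦ ?_⟩
  have hsub : ball y (r / 4) ⊆ ball x r :=
    ball_subset_ball' (by linarith [mem_ball.1 hy])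
  refine Complex.norm_fderiv_le_div_of_mapsTo_ball
    (hf.mono fun w hw ↦ (hball (hsub hw)).1) (fun w hw ↦ ?_) hR
  have hfw : dist (f w) (f x) < 1 := (hball (hsub hw)).2
  have hfy : dist (f y) (f x) < 1 := (hball (hsub (mem_ball_self hR))).2
  exact mem_closedBall.2 (by linarith [dist_triangle_right (f w) (f y) (f x)])

-- Schwarz's lemma is applied to the increment `w ↦ f (w + (y - x)) - f w`.
lemma norm_fderiv_sub_fderiv_le {y : E} (hf : ∀ w ∈ ball x (2 * R), DifferentiableAt ℂ f w)
    (hK : ∀ w ∈ ball x (2 * R), ‖fderiv ℂ f w‖ ≤ K) (hy : y ∈ ball x R) :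
    ‖fderiv ℂ f y - fderiv ℂ f x‖ ≤ 2 * (K * ‖y - x‖) / R := by
  have hR : 0 < R := pos_of_mem_ball hy
  have hx : x ∈ ball x R := mem_ball_self hR
  have hmem : ∀ w ∈ ball x R, w ∈ ball x (2 * R) := fun w hw ↦
    ball_subset_ball (by linarith) hw
  have hshift : ∀ w ∈ ball x R, w + (y - x) ∈ ball x (2 * R) := fun w hw ↦
    add_mem_ball_two_mul hw (mem_ball_iff_norm.1 hy)
  have hlip : ∀ w ∈ ball x R, ‖f (w + (y - x)) - f w‖ ≤ K * ‖y - x‖ := fun w hw ↦ by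
    simpa using (convex_ball x (2 * R)).norm_image_sub_le_of_norm_fderiv_le (𝕜 := ℂ) hf hK
      (hmem w hw) (hshift w hw)
  have hd : ∀ w ∈ ball x R, HasFDerivAt (fun w ↦ f (w + (y - x)) - f w)
      (fderiv ℂ f (w + (y - x)) - fderiv ℂ f w) w := fun w hw ↦
    ((hasFDerivAt_comp_add_right _).2 (hf _ (hshift w hw)).hasFDerivAt).sub
      (hf w (hmem w hw)).hasFDerivAt
  have hderiv := (hd x hx).fderiv
  rw [add_sub_cancel] at hderiv
  rw [← hderiv]
  refine Complex.norm_fderiv_le_div_of_mapsTo_ball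
    (fun w hw ↦ (hd w hw).differentiableAt.differentiableWithinAt) (fun w hw ↦ ?_) hR
  rw [mem_closedBall_iff_norm, two_mul]
  exact (norm_sub_le _ _).trans (add_le_add (hlip w hw) (hlip x hx))

lemma continuousOn_fderiv_of_differentiableOn (hU : IsOpen U) (hf : DifferentiableOn ℂ f U) :
    ContinuousOn (fderiv ℂ f) U := by
  intro x hx
  obtain ⟨R, hR, K, hRU, hK⟩ := exists_ball_two_mul_norm_fderiv_le hU hf hx
  have hbound : ∀ y ∈ ball x R, ‖fderiv ℂ f y - fderiv ℂ f x‖ ≤ 2 * (K * ‖y - x‖) / R :=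
    fun y hy ↦ norm_fderiv_sub_fderiv_le
      (fun w hw ↦ hf.differentiableAt (hU.mem_nhds (hRU hw))) hK hy
  refine ContinuousAt.continuousWithinAt (tendsto_iff_norm_sub_tendsto_zero.2 ?_)
  refine squeeze_zero' (Filter.Eventually.of_forall fun _ ↦ norm_nonneg _)
    (Filter.eventually_of_mem (ball_mem_nhds x hR) hbound) ?_
  have hcont : Continuous fun y ↦ 2 * (K * ‖y - x‖) / R := by fun_prop
  simpa using hcont.tendsto x

lemma hasDerivAt_comp_add_smul {ζ : ℂ} (hf : DifferentiableAt ℂ f (x + ζ • v)) :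
    HasDerivAt (fun ζ : ℂ ↦ f (x + ζ • v)) (fderiv ℂ f (x + ζ • v) v) ζ :=
  hf.hasFDerivAt.comp_hasDerivAt ζ <| by
    simpa using ((hasDerivAt_id ζ).smul_const v).const_add x

lemma add_circleMap_smul_mem_ball_two_mul {y : E} (hρ : 0 ≤ ρ) (hρv : ρ * ‖v‖ < R)
    (hy : y ∈ ball x R) (θ : ℝ) : y + circleMap 0 ρ θ • v ∈ ball x (2 * R) :=
  add_mem_ball_two_mul hy (by simpa [norm_smul, abs_of_nonneg hρ] using hρv)

lemma continuous_circleIntegrand_comp_add_smul {G : Type*} [NormedAddCommGroup G] [NormedSpace ℂ G]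
    {φ : ℂ → ℂ} {g : E → G} {y : E} (hρ : 0 ≤ ρ) (hφ : ContinuousOn φ (sphere 0 ρ))
    (hρv : ρ * ‖v‖ < R) (hg : ContinuousOn g (ball x (2 * R))) (hy : y ∈ ball x R) :
    Continuous fun θ : ℝ ↦
      deriv (circleMap 0 ρ) θ • φ (circleMap 0 ρ θ) • g (y + circleMap 0 ρ θ • v) := by
  have hφ_circle : Continuous fun θ : ℝ ↦ φ (circleMap 0 ρ θ) :=
    hφ.comp_continuous (continuous_circleMap 0 ρ) (circleMap_mem_sphere 0 hρ)
  have hg_circle : Continuous fun θ : ℝ ↦ g (y + circleMap 0 ρ θ • v) :=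
    hg.comp_continuous (by fun_prop) (add_circleMap_smul_mem_ball_two_mul hρ hρv hy)
  simp only [deriv_circleMap]
  exact ((continuous_circleMap 0 ρ).mul continuous_const).smul (hφ_circle.smul hg_circle)

lemma differentiableAt_circleIntegral_comp_add_smul {φ : ℂ → ℂ} (hρ : 0 ≤ ρ)
    (hφ : ContinuousOn φ (sphere 0 ρ)) (hρv : ρ * ‖v‖ < R)
    (hf : DifferentiableOn ℂ f (ball x (2 * R)))
    (hK : ∀ y ∈ ball x (2 * R), ‖fderiv ℂ f y‖ ≤ K) :
    DifferentiableAt ℂ (fun y ↦ ∮ ζ in C(0, ρ), φ ζ • f (y + ζ • v)) x := by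
  have hR : 0 < R := (mul_nonneg hρ (norm_nonneg v)).trans_lt hρv
  have hball : ball x R ∈ 𝓝 x := ball_mem_nhds x hR
  have hmem := fun y (hy : y ∈ ball x R) ↦ add_circleMap_smul_mem_ball_two_mul hρ hρv hy
  have hcont := fun y (hy : y ∈ ball x R) ↦
    continuous_circleIntegrand_comp_add_smul hρ hφ hρv hf.continuousOn hy
  have hcont' := continuous_circleIntegrand_comp_add_smul hρ hφ hρv
    (continuousOn_fderiv_of_differentiableOn isOpen_ball hf) (mem_ball_self hR)
  have hφ_circle : Continuous fun θ : ℝ ↦ ‖φ (circleMap 0 ρ θ)‖ :=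
    (hφ.comp_continuous (continuous_circleMap 0 ρ) (circleMap_mem_sphere 0 hρ)).norm
  have hderiv : ∀ θ, ∀ y ∈ ball x R, HasFDerivAt
      (fun y ↦ deriv (circleMap 0 ρ) θ • φ (circleMap 0 ρ θ) • f (y + circleMap 0 ρ θ • v))
      (deriv (circleMap 0 ρ) θ • φ (circleMap 0 ρ θ) • fderiv ℂ f (y + circleMap 0 ρ θ • v)) y :=
    fun θ y hy ↦ (((hasFDerivAt_comp_add_right _).2 (hf.differentiableAt
      (isOpen_ball.mem_nhds (hmem y hy θ))).hasFDerivAt).const_smul _).const_smul _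
  have hbound : ∀ θ, ∀ y ∈ ball x R, ‖deriv (circleMap 0 ρ) θ • φ (circleMap 0 ρ θ) •
      fderiv ℂ f (y + circleMap 0 ρ θ • v)‖ ≤ |ρ| * (‖φ (circleMap 0 ρ θ)‖ * K) := fun θ y hy ↦ by
    rw [norm_smul, norm_smul, deriv_circleMap, norm_mul, norm_circleMap_zero, Complex.norm_I,
      mul_one]
    gcongr
    exact hK _ (hmem y hy θ)
  exact (intervalIntegral.hasFDerivAt_integral_of_dominated_of_fderiv_le hball
    (Filter.eventually_of_mem hball fun y hy ↦ (hcont y hy).aestronglyMeasurable)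
    ((hcont x (mem_ball_self hR)).intervalIntegrable _ _) hcont'.aestronglyMeasurable
    (.of_forall fun θ _ ↦ hbound θ)
    ((continuous_const.mul (hφ_circle.mul continuous_const)).intervalIntegrable _ _)
    (.of_forall fun θ _ ↦ hderiv θ)).differentiableAt

variable [CompleteSpace F]

lemma two_pi_I_smul_fderiv_apply_eq_circleIntegral (hρ : 0 < ρ)
    (hf : ∀ ζ ∈ closedBall (0 : ℂ) ρ, DifferentiableAt ℂ f (x + ζ • v)) :
    (2 * Real.pi * Complex.I) • fderiv ℂ f x v =
      ∮ ζ in C(0, ρ), (1 / ζ ^ 2) • f (x + ζ • v) := by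
  have hslice : DifferentiableOn ℂ (fun ζ : ℂ ↦ f (x + ζ • v)) (closedBall 0 ρ) := fun ζ hζ ↦
    (hasDerivAt_comp_add_smul (hf ζ hζ)).differentiableAt.differentiableWithinAt
  have hderiv := (hasDerivAt_comp_add_smul (hf 0 (mem_closedBall_self hρ.le))).deriv
  rw [zero_smul, add_zero] at hderiv
  simpa [hderiv] using (hslice.deriv_eq_smul_circleIntegral hρ).symm

lemma differentiableOn_fderiv_apply (hU : IsOpen U) (hf : DifferentiableOn ℂ f U) (v : E) :
    DifferentiableOn ℂ (fun x ↦ fderiv ℂ f x v) U := by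
  intro x hx
  obtain ⟨R, hR, K, hRU, hK⟩ := exists_ball_two_mul_norm_fderiv_le hU hf hx
  obtain ⟨ρ, hρ, hρv⟩ : ∃ ρ > 0, ρ * ‖v‖ < R := by
    refine ⟨R / (‖v‖ + 1), by positivity, ?_⟩
    rw [div_mul_eq_mul_div, div_lt_iff₀ (by positivity)]
    linarith
  have hcauchy : ∀ y ∈ ball x R, fderiv ℂ f y v = (2 * Real.pi * Complex.I)⁻¹ •
      ∮ ζ in C(0, ρ), (1 / ζ ^ 2) • f (y + ζ • v) := fun y hy ↦ by
    rw [← two_pi_I_smul_fderiv_apply_eq_circleIntegral hρ, inv_smul_smul₀ Complex.two_pi_I_ne_zero]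
    refine fun ζ hζ ↦ hf.differentiableAt (hU.mem_nhds (hRU (add_mem_ball_two_mul hy ?_)))
    rw [norm_smul]
    exact (mul_le_mul_of_nonneg_right (mem_closedBall_zero_iff.1 hζ) (norm_nonneg v)).trans_lt hρv
  have hweight : ContinuousOn (fun ζ : ℂ ↦ 1 / ζ ^ 2) (sphere 0 ρ) :=
    continuousOn_const.div (by fun_prop) fun ζ hζ ↦ pow_ne_zero 2 (ne_of_mem_sphere hζ hρ.ne')
  exact ((differentiableAt_circleIntegral_comp_add_smul hρ.le hweight hρv (hf.mono hRU)
    hK).const_smul _).congr_of_eventuallyEq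
      (Filter.eventually_of_mem (ball_mem_nhds x hR) hcauchy) |>.differentiableWithinAt

end DirectionalDerivative

section WirtingerDerivative

open Set
open scoped Topology

variable {n : ℕ} {U : Set (EuclideanSpace ℂ (Fin n))} {F G H : EuclideanSpace ℂ (Fin n) → ℂ}

lemma differentiableOn_wpderiv (hU : IsOpen U) (hF : DifferentiableOn ℂ F U) (k : Fin n) :
    DifferentiableOn ℂ (wpderiv k F) U :=
  differentiableOn_fderiv_apply hU hF _

lemma differentiableOn_iterate_wpderiv (hU : IsOpen U) (hF : DifferentiableOn ℂ F U) (k : Fin n)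
    (p : ℕ) : DifferentiableOn ℂ ((wpderiv k)^[p] F) U := by
  induction p with
  | zero => exact hF
  | succ p ih =>
    rw [Function.iterate_succ_apply']
    exact differentiableOn_wpderiv hU ih k

lemma iteratedDeriv_comp_add_smul_single (hU : IsOpen U) (hF : DifferentiableOn ℂ F U) (k : Fin n)
    (p : ℕ) {y : EuclideanSpace ℂ (Fin n)} {ζ : ℂ} (hζ : y + ζ • EuclideanSpace.single k 1 ∈ U) :
    iteratedDeriv p (fun ζ : ℂ ↦ F (y + ζ • EuclideanSpace.single k 1)) ζ =
      (wpderiv k)^[p] F (y + ζ • EuclideanSpace.single k 1) := by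
  induction p generalizing ζ with
  | zero => simp
  | succ p ih =>
    have hopen : IsOpen {ζ : ℂ | y + ζ • EuclideanSpace.single k 1 ∈ U} :=
      hU.preimage (by fun_prop)
    have hderiv := hasDerivAt_comp_add_smul
      ((differentiableOn_iterate_wpderiv hU hF k p).differentiableAt (hU.mem_nhds hζ))
    have hnear : iteratedDeriv p (fun ζ : ℂ ↦ F (y + ζ • EuclideanSpace.single k 1)) =ᶠ[𝓝 ζ]
        fun ζ ↦ (wpderiv k)^[p] F (y + ζ • EuclideanSpace.single k 1) :=
      Filter.eventually_of_mem (hopen.mem_nhds hζ) fun _ hω ↦ ih hω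
    rw [iteratedDeriv_succ, Function.iterate_succ_apply', hnear.deriv_eq, hderiv.deriv, wpderiv]

lemma eqOn_wpderiv_smul_add_smul (hU : IsOpen U) (hF : DifferentiableOn ℂ F U)
    (hG : DifferentiableOn ℂ G U) {a b : ℂ} (hH : EqOn H (a • F + b • G) U) (k : Fin n) :
    EqOn (wpderiv k H) (a • wpderiv k F + b • wpderiv k G) U := fun x hx ↦ by
  have hFx := (hF.differentiableAt (hU.mem_nhds hx)).hasFDerivAt
  have hGx := (hG.differentiableAt (hU.mem_nhds hx)).hasFDerivAt
  have hHx := ((hFx.const_smul a).add (hGx.const_smul b)).congr_of_eventuallyEq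
    (Filter.eventually_of_mem (hU.mem_nhds hx) hH)
  simp [wpderiv, hHx.fderiv]

lemma eqOn_iterate_wpderiv_smul_add_smul (hU : IsOpen U) (hF : DifferentiableOn ℂ F U)
    (hG : DifferentiableOn ℂ G U) {a b : ℂ} (hH : EqOn H (a • F + b • G) U) (k : Fin n) (p : ℕ) :
    EqOn ((wpderiv k)^[p] H) (a • (wpderiv k)^[p] F + b • (wpderiv k)^[p] G) U := by
  induction p with
  | zero => exact hH
  | succ p ih =>
    simp only [Function.iterate_succ_apply']
    exact eqOn_wpderiv_smul_add_smul hU (differentiableOn_iterate_wpderiv hU hF k p)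
      (differentiableOn_iterate_wpderiv hU hG k p) ih k

/-- The mixed derivative `∂_{k₁}^{m k₁} ⋯ ∂_{kₚ}^{m kₚ} F` along a list `l = [k₁, …, kₚ]` of
coordinates: the partial stages of `wpderivMulti`, on which estimates are proved by induction. -/
noncomputable def wpderivList (m : Fin n → ℕ) (l : List (Fin n))
    (F : EuclideanSpace ℂ (Fin n) → ℂ) : EuclideanSpace ℂ (Fin n) → ℂ :=
  l.foldr (fun k G ↦ (wpderiv k)^[m k] G) F

lemma wpderivMulti_eq_wpderivList (m : Fin n → ℕ) (F : EuclideanSpace ℂ (Fin n) → ℂ) :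
    wpderivMulti m F = wpderivList m (List.finRange n) F :=
  Fin.foldr_eq_finRange_foldr ..

variable {m : Fin n → ℕ} {k : Fin n} {l : List (Fin n)}

lemma wpderivList_cons : wpderivList m (k :: l) F = (wpderiv k)^[m k] (wpderivList m l F) := rfl

lemma wpderivList_eq_self (hm : ∀ j ∈ l, m j = 0) : wpderivList m l F = F := by
  induction l with
  | nil => rfl
  | cons k l ih =>
    rw [List.forall_mem_cons] at hm
    rw [wpderivList_cons, hm.1, ih hm.2, Function.iterate_zero_apply]

lemma differentiableOn_wpderivList (hU : IsOpen U) (hF : DifferentiableOn ℂ F U) :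
    DifferentiableOn ℂ (wpderivList m l F) U := by
  induction l with
  | nil => exact hF
  | cons k l ih => exact differentiableOn_iterate_wpderiv hU ih k (m k)

lemma eqOn_wpderivList_smul_add_smul (hU : IsOpen U) (hF : DifferentiableOn ℂ F U)
    (hG : DifferentiableOn ℂ G U) {a b : ℂ} (hH : EqOn H (a • F + b • G) U) :
    EqOn (wpderivList m l H) (a • wpderivList m l F + b • wpderivList m l G) U := by
  induction l with
  | nil => exact hH
  | cons k l ih =>
    exact eqOn_iterate_wpderiv_smul_add_smul hU (differentiableOn_wpderivList hU hF)
      (differentiableOn_wpderivList hU hG) ih k (m k)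

end WirtingerDerivative

section PolydiscEstimates

open Metric
open scoped ComplexConjugate Nat Real

/-- The closed polydisc of centre `z` and polyradius `r`, inside Euclidean space. Radii equal to `0`
are allowed, so that coordinates without differentiation can be frozen. -/
def closedPolydisc {ι : Type*} (z : EuclideanSpace ℂ ι) (r : ι → ℝ) : Set (EuclideanSpace ℂ ι) :=
  {w | ∀ j, ‖w j - z j‖ ≤ r j}

lemma self_mem_closedPolydisc {ι : Type*} {z : EuclideanSpace ℂ ι} {r : ι → ℝ} (hr : 0 ≤ r) :
    z ∈ closedPolydisc z r := fun j ↦ by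
  rw [sub_self, norm_zero]
  exact hr j

lemma add_smul_single_mem_closedPolydisc {ι : Type*} [DecidableEq ι] {z w : EuclideanSpace ℂ ι}
    {r : ι → ℝ} {k : ι} {ζ : ℂ} (hw : w ∈ closedPolydisc z r) (hk : w k = z k) (hζ : ‖ζ‖ ≤ r k) :
    w + ζ • EuclideanSpace.single k 1 ∈ closedPolydisc z r := fun j ↦ by
  obtain rfl | hj := eq_or_ne j k
  · simpa [hk] using hζ
  · simpa [hj] using hw j

variable {n : ℕ} {U : Set (EuclideanSpace ℂ (Fin n))} {F g h : EuclideanSpace ℂ (Fin n) → ℂ}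
  {k : Fin n} {p : ℕ} {y z w : EuclideanSpace ℂ (Fin n)} {ρ C M : ℝ}

lemma diffContOnCl_comp_add_smul_single (hU : IsOpen U) (hF : DifferentiableOn ℂ F U)
    (hy : ∀ ζ ∈ closedBall (0 : ℂ) ρ, y + ζ • EuclideanSpace.single k 1 ∈ U) :
    DiffContOnCl ℂ (fun ζ : ℂ ↦ F (y + ζ • EuclideanSpace.single k 1)) (ball 0 ρ) := by
  refine DifferentiableOn.diffContOnCl fun ζ hζ ↦ ?_
  have hζU := hy ζ (closure_ball_subset_closedBall hζ)
  exact (hasDerivAt_comp_add_smul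
    (hF.differentiableAt (hU.mem_nhds hζU))).differentiableAt.differentiableWithinAt

lemma norm_iterate_wpderiv_le (hU : IsOpen U) (hF : DifferentiableOn ℂ F U) (hρ : 0 < ρ)
    (hy : ∀ ζ ∈ closedBall (0 : ℂ) ρ, y + ζ • EuclideanSpace.single k 1 ∈ U)
    (hC : ∀ ζ ∈ sphere (0 : ℂ) ρ, ‖F (y + ζ • EuclideanSpace.single k 1)‖ ≤ C) :
    ‖(wpderiv k)^[p] F y‖ ≤ p ! * C / ρ ^ p := by
  have hslice := iteratedDeriv_comp_add_smul_single hU hF k p (hy 0 (mem_closedBall_self hρ.le))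
  rw [zero_smul, add_zero] at hslice
  rw [← hslice]
  exact Complex.norm_iteratedDeriv_le_of_forall_mem_sphere_norm_le p hρ
    (diffContOnCl_comp_add_smul_single hU hF hy) hC

lemma norm_iterate_wpderiv_le_of_abs_re_le (hU : IsOpen U) (hF : DifferentiableOn ℂ F U)
    (hρ : 0 < ρ) (hy : ∀ ζ ∈ closedBall (0 : ℂ) ρ, y + ζ • EuclideanSpace.single k 1 ∈ U)
    (hp : p ≠ 0)
    (hM : ∀ ζ ∈ sphere (0 : ℂ) ρ, |(F (y + ζ • EuclideanSpace.single k 1)).re| ≤ M) :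
    ‖(wpderiv k)^[p] F y‖ ≤ p ! * (4 / π * M) / ρ ^ p := by
  have hslice := iteratedDeriv_comp_add_smul_single hU hF k p (hy 0 (mem_closedBall_self hρ.le))
  rw [zero_smul, add_zero] at hslice
  rw [← hslice]
  exact norm_iteratedDeriv_le_of_abs_re_le hρ (diffContOnCl_comp_add_smul_single hU hF hy) hp hM

variable {m : Fin n → ℕ} {l : List (Fin n)} {r : Fin n → ℝ}

-- The innermost derivative gains the factor `4 / π` from the bound on the real part; the remaining
-- ones only need Cauchy's estimate.
lemma norm_wpderivList_le (hU : IsOpen U) (hF : DifferentiableOn ℂ F U) (hl : l.Nodup)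
    (hm : ∃ j ∈ l, m j ≠ 0) (hr : ∀ j ∈ l, m j ≠ 0 → 0 < r j) (hPU : closedPolydisc z r ⊆ U)
    (hM : ∀ x ∈ closedPolydisc z r, |(F x).re| ≤ M) (hw : w ∈ closedPolydisc z r)
    (hwz : ∀ j ∈ l, w j = z j) :
    ‖wpderivList m l F w‖ ≤ 4 / π * M * (l.map fun j ↦ ((m j)! : ℝ) / r j ^ m j).prod := by
  induction l generalizing w with
  | nil => simp at hm
  | cons k l ih =>
    rw [List.nodup_cons] at hl
    rw [List.forall_mem_cons] at hr hwz
    rw [wpderivList_cons, List.map_cons, List.prod_cons]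
    have hlz (ζ : ℂ) : ∀ j ∈ l, (w + ζ • EuclideanSpace.single k (1 : ℂ)) j = z j := fun j hj ↦ by
      simpa [ne_of_mem_of_not_mem hj hl.1] using hwz.2 j hj
    have hdisc : ∀ ζ ∈ closedBall (0 : ℂ) (r k),
        w + ζ • EuclideanSpace.single k 1 ∈ closedPolydisc z r := fun ζ hζ ↦
      add_smul_single_mem_closedPolydisc hw hwz.1 (mem_closedBall_zero_iff.1 hζ)
    by_cases hmk : m k = 0
    · have hml : ∃ j ∈ l, m j ≠ 0 := by simpa [hmk] using hm
      simpa [hmk] using ih hl.2 hml hr.2 hw hwz.2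
    by_cases hml : ∃ j ∈ l, m j ≠ 0
    · refine (norm_iterate_wpderiv_le hU (differentiableOn_wpderivList hU hF) (hr.1 hmk)
        (fun ζ hζ ↦ hPU (hdisc ζ hζ)) fun ζ hζ ↦ ih hl.2 hml hr.2
          (hdisc ζ (sphere_subset_closedBall hζ)) (hlz ζ)).trans_eq ?_
      ring
    · push Not at hml
      have hprod : (l.map fun j ↦ ((m j)! : ℝ) / r j ^ m j).prod = 1 :=
        List.prod_eq_one <| List.forall_mem_map.2 fun j hj ↦ by simp [hml j hj]
      rw [wpderivList_eq_self hml, hprod]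
      refine (norm_iterate_wpderiv_le_of_abs_re_le hU hF (hr.1 hmk) (fun ζ hζ ↦ hPU (hdisc ζ hζ))
        hmk fun ζ hζ ↦ hM _ (hdisc ζ (sphere_subset_closedBall hζ))).trans_eq ?_
      ring

lemma norm_wpderivMulti_le (hU : IsOpen U) (hF : DifferentiableOn ℂ F U) (hm : m ≠ 0)
    (hr : 0 ≤ r) (hrm : ∀ j, m j ≠ 0 → 0 < r j) (hPU : closedPolydisc z r ⊆ U)
    (hM : ∀ x ∈ closedPolydisc z r, |(F x).re| ≤ M) :
    ‖wpderivMulti m F z‖ ≤ 4 / π * M * ∏ j, ((m j)! : ℝ) / r j ^ m j := by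
  obtain ⟨j, hj⟩ := Function.ne_iff.1 hm
  rw [wpderivMulti_eq_wpderivList, Fin.prod_univ_def]
  exact norm_wpderivList_le hU hF (List.nodup_finRange n) ⟨j, List.mem_finRange j, hj⟩
    (fun j _ ↦ hrm j) hPU hM (self_mem_closedPolydisc hr) fun _ _ ↦ rfl

lemma exists_norm_eq_one_norm_mul_add_conj_mul_eq (a b : ℂ) :
    ∃ u : ℂ, ‖u‖ = 1 ∧ ‖u * a + conj u * b‖ = ‖a‖ + ‖b‖ := by
  set s : ℝ := (b.arg - a.arg) / 2 with hs
  set t : ℝ := (b.arg + a.arg) / 2 with ht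
  refine ⟨Complex.exp (s * Complex.I), Complex.norm_exp_ofReal_mul_I s, ?_⟩
  have hrotate_a : Complex.exp (s * Complex.I) * a = ‖a‖ * Complex.exp (t * Complex.I) := by
    nth_rw 1 [← Complex.norm_mul_exp_arg_mul_I a]
    rw [mul_left_comm, ← Complex.exp_add, hs, ht]
    push_cast
    ring_nf
  have hrotate_b : conj (Complex.exp (s * Complex.I)) * b = ‖b‖ * Complex.exp (t * Complex.I) := by
    nth_rw 1 [← Complex.norm_mul_exp_arg_mul_I b]
    rw [← Complex.exp_conj, map_mul, Complex.conj_ofReal, Complex.conj_I, mul_left_comm,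
      ← Complex.exp_add, hs, ht]
    push_cast
    ring_nf
  rw [hrotate_a, hrotate_b, ← add_mul, norm_mul, Complex.norm_exp_ofReal_mul_I, mul_one,
    ← Complex.ofReal_add, Complex.norm_of_nonneg (by positivity)]

theorem norm_wpderivMulti_add_norm_wpderivMulti_le (hU : IsOpen U) (hh : DifferentiableOn ℂ h U)
    (hg : DifferentiableOn ℂ g U) (hm : m ≠ 0) (hr : 0 ≤ r) (hrm : ∀ j, m j ≠ 0 → 0 < r j)
    (hPU : closedPolydisc z r ⊆ U) (hM : ∀ x ∈ closedPolydisc z r, ‖h x + conj (g x)‖ ≤ M) :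
    ‖wpderivMulti m h z‖ + ‖wpderivMulti m g z‖ ≤ 4 / π * M * ∏ j, ((m j)! : ℝ) / r j ^ m j := by
  obtain ⟨u, hu, hnorm⟩ :=
    exists_norm_eq_one_norm_mul_add_conj_mul_eq (wpderivMulti m h z) (wpderivMulti m g z)
  have hre : ∀ x ∈ closedPolydisc z r, |((u • h + conj u • g) x).re| ≤ M := fun x hx ↦ by
    have hsame : ((u • h + conj u • g) x).re = (u * (h x + conj (g x))).re := by
      simp [Complex.mul_re]
      ring
    calc |((u • h + conj u • g) x).re| ≤ ‖u * (h x + conj (g x))‖ := by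
          rw [hsame]
          exact Complex.abs_re_le_norm _
      _ ≤ M := by
          rw [norm_mul, hu, one_mul]
          exact hM x hx
  have hlin := eqOn_wpderivList_smul_add_smul (m := m) (l := List.finRange n) hU hh hg
    (Set.eqOn_refl (u • h + conj u • g) U) (hPU (self_mem_closedPolydisc hr))
  simp only [← wpderivMulti_eq_wpderivList, Pi.add_apply, Pi.smul_apply, smul_eq_mul] at hlin
  rw [← hnorm, ← hlin]
  exact norm_wpderivMulti_le hU ((hh.const_smul u).add (hg.const_smul _)) hm hr hrm hPU hre

end PolydiscEstimates

section PolydiscRadius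

open scoped Nat

variable {ι : Type*} [Fintype ι] {m : ι → ℕ} {z : EuclideanSpace ℂ ι} {r : ι → ℝ}

lemma norm_sq_le_of_norm_sub_le {a b : ℂ} {ρ : ℝ} (h : ‖b - a‖ ≤ ρ) (hρ : ρ ≤ 1 - ‖a‖) :
    ‖b‖ ^ 2 ≤ ‖a‖ ^ 2 + ρ * (1 + ‖a‖) := by
  have hρ0 : 0 ≤ ρ := (norm_nonneg _).trans h
  have hb : ‖b‖ ≤ ‖a‖ + ρ := by linarith [norm_sub_norm_le b a]
  nlinarith [norm_nonneg b]

lemma closedPolydisc_subset_ball (h : ∑ j, r j * (1 + ‖z j‖) < 1 - ‖z‖ ^ 2) :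
    closedPolydisc z r ⊆ Metric.ball 0 1 := fun w hw ↦ by
  have hr : ∀ j, 0 ≤ r j := fun j ↦ (norm_nonneg _).trans (hw j)
  have hrz : ∀ j, r j ≤ 1 - ‖z j‖ := fun j ↦ by
    have hterm : r j * (1 + ‖z j‖) ≤ ∑ j, r j * (1 + ‖z j‖) :=
      Finset.single_le_sum (f := fun j ↦ r j * (1 + ‖z j‖))
        (fun j _ ↦ mul_nonneg (hr j) (by positivity)) (Finset.mem_univ j)
    have hzj : ‖z j‖ ^ 2 ≤ ‖z‖ ^ 2 := by gcongr; exact PiLp.norm_apply_le z j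
    exact le_of_mul_le_mul_right (by linarith) (by positivity : 0 < 1 + ‖z j‖)
  have hw2 : ‖w‖ ^ 2 < 1 := calc
    ‖w‖ ^ 2 = ∑ j, ‖w j‖ ^ 2 := EuclideanSpace.norm_sq_eq w
    _ ≤ ∑ j, (‖z j‖ ^ 2 + r j * (1 + ‖z j‖)) :=
        Finset.sum_le_sum fun j _ ↦ norm_sq_le_of_norm_sub_le (hw j) (hrz j)
    _ < 1 := by rw [Finset.sum_add_distrib, ← EuclideanSpace.norm_sq_eq]; linarith
  rw [mem_ball_zero_iff]
  exact (sq_lt_one_iff₀ (norm_nonneg w)).1 hw2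

/-- The polyradius used for Cauchy's estimates of order `m` at `z`. The weights `m j / |m|` optimise
the resulting bound, and the factor `1 / √n` keeps the polydisc inside the unit ball. -/
noncomputable def polydiscRadius (m : ι → ℕ) (z : EuclideanSpace ℂ ι) (j : ι) : ℝ :=
  (1 - ‖z‖ ^ 2) * (m j / (∑ i, m i : ℕ)) / (√(Fintype.card ι) * (1 + ‖z j‖))

lemma one_sub_norm_sq_pos (hz : ‖z‖ < 1) : 0 < 1 - ‖z‖ ^ 2 :=
  sub_pos.2 ((sq_lt_one_iff₀ (norm_nonneg z)).2 hz)

lemma polydiscRadius_nonneg (hz : ‖z‖ < 1) : 0 ≤ polydiscRadius m z := fun j ↦ by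
  have hD := one_sub_norm_sq_pos hz
  rw [Pi.zero_apply, polydiscRadius]
  positivity

lemma polydiscRadius_pos (hz : ‖z‖ < 1) {j : ι} (hj : m j ≠ 0) : 0 < polydiscRadius m z j := by
  have hD := one_sub_norm_sq_pos hz
  have hmj : (0 : ℝ) < m j := Nat.cast_pos.2 (Nat.pos_of_ne_zero hj)
  have hsum : (0 : ℝ) < (∑ i, m i : ℕ) := by
    rw [Nat.cast_sum]
    exact Finset.sum_pos' (fun i _ ↦ Nat.cast_nonneg _) ⟨j, Finset.mem_univ j, hmj⟩
  have hcard : (0 : ℝ) < Fintype.card ι := Nat.cast_pos.2 (Fintype.card_pos_iff.2 ⟨j⟩)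
  rw [polydiscRadius]
  positivity

lemma sum_polydiscRadius_mul (hm : m ≠ 0) :
    ∑ j, polydiscRadius m z j * (1 + ‖z j‖) = (1 - ‖z‖ ^ 2) / √(Fintype.card ι) := by
  have hsum : ((∑ i, m i : ℕ) : ℝ) ≠ 0 := Nat.cast_ne_zero.2 fun h ↦
    hm (funext fun j ↦ Finset.sum_eq_zero_iff.1 h j (Finset.mem_univ j))
  have hterm : ∀ j, polydiscRadius m z j * (1 + ‖z j‖) =
      (1 - ‖z‖ ^ 2) / √(Fintype.card ι) / (∑ i, m i : ℕ) * m j := fun j ↦ by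
    have hzj : 1 + ‖z j‖ ≠ 0 := by positivity
    rw [polydiscRadius, ← div_div, div_mul_cancel₀ _ hzj]
    ring
  simp_rw [hterm]
  rw [← Finset.mul_sum, ← Nat.cast_sum, div_mul_cancel₀ _ hsum]

lemma closedPolydisc_polydiscRadius_subset_ball (hι : 2 ≤ Fintype.card ι) (hm : m ≠ 0)
    (hz : ‖z‖ < 1) : closedPolydisc z (polydiscRadius m z) ⊆ Metric.ball 0 1 := by
  refine closedPolydisc_subset_ball ?_
  rw [sum_polydiscRadius_mul hm]
  refine div_lt_self (one_sub_norm_sq_pos hz) (Real.lt_sqrt_of_sq_lt ?_)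
  rw [one_pow]
  exact_mod_cast hι

lemma prod_factorial_div_polydiscRadius_pow :
    ∏ j, ((m j)! : ℝ) / polydiscRadius m z j ^ m j =
      √(Fintype.card ι) ^ (∑ j, m j) * (∏ j, (1 + ‖z j‖) ^ m j) / (1 - ‖z‖ ^ 2) ^ (∑ j, m j) *
        (((∑ j, m j : ℕ) ^ (∑ j, m j) * ∏ j, ((m j)! : ℝ)) / ∏ j, (m j : ℝ) ^ m j) := by
  have hfactor : ∀ j, ((m j)! : ℝ) / polydiscRadius m z j ^ m j =
      √(Fintype.card ι) ^ m j * (1 + ‖z j‖) ^ m j / (1 - ‖z‖ ^ 2) ^ m j *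
        (((∑ i, m i : ℕ) : ℝ) ^ m j * (m j)! / (m j : ℝ) ^ m j) := fun j ↦ by
    rw [polydiscRadius, div_pow, mul_pow, div_pow, mul_pow]
    field_simp
  simp_rw [hfactor, Finset.prod_mul_distrib, Finset.prod_div_distrib, Finset.prod_mul_distrib,
    Finset.prod_pow_eq_pow_sum]

lemma prod_factorial_div_polydiscRadius_pow_le (hι : 1 ≤ Fintype.card ι) (hz : ‖z‖ < 1) :
    ∏ j, ((m j)! : ℝ) / polydiscRadius m z j ^ m j ≤
      (Fintype.card ι : ℝ) ^ (((∑ j, m j : ℕ) : ℝ) / 2) *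
        (Fintype.card ι + (∑ j, m j) - 1).choose (Fintype.card ι - 1) * (∑ j, m j)! *
        (∏ j, (1 + ‖z j‖) ^ m j) / (1 - ‖z‖ ^ 2) ^ (∑ j, m j) := by
  set N := ∑ j, m j with hN
  have hD := one_sub_norm_sq_pos hz
  have hsqrt : √(Fintype.card ι) ^ N = (Fintype.card ι : ℝ) ^ ((N : ℝ) / 2) := by
    rw [Real.rpow_div_two_eq_sqrt _ (Nat.cast_nonneg _), Real.rpow_natCast]
  have hchoose : (Fintype.card ι).multichoose N =
      (Fintype.card ι + N - 1).choose (Fintype.card ι - 1) := by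
    rw [Nat.multichoose_eq, ← Nat.choose_symm_of_eq_add]
    omega
  have hcomb : ((N : ℝ) ^ N * ∏ j, ((m j)! : ℝ)) / ∏ j, (m j : ℝ) ^ m j ≤
      (Fintype.card ι + N - 1).choose (Fintype.card ι - 1) * N ! := by
    have hpos : 0 < ∏ j, (m j : ℝ) ^ m j :=
      Finset.prod_pos fun j _ ↦ by exact_mod_cast Nat.pow_self_pos
    rw [div_le_iff₀ hpos, ← hchoose]
    exact_mod_cast sum_pow_sum_mul_prod_factorial_le Finset.univ m
  rw [prod_factorial_div_polydiscRadius_pow, ← hN, hsqrt]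
  refine (mul_le_mul_of_nonneg_left hcomb (by positivity)).trans_eq ?_
  ring

end PolydiscRadius

theorem stmt10 (n : ℕ) (hn : 2 ≤ n)
    (f h g : EuclideanSpace ℂ (Fin n) → ℂ)
    (hh : DifferentiableOn ℂ h (Metric.ball 0 1))
    (hg : DifferentiableOn ℂ g (Metric.ball 0 1))
    (hg0 : g 0 = 0)
    (hfd : ∀ z ∈ Metric.ball (0 : EuclideanSpace ℂ (Fin n)) 1,
      f z = h z + (starRingEnd ℂ) (g z))
    (hmap : ∀ z ∈ Metric.ball (0 : EuclideanSpace ℂ (Fin n)) 1, ‖f z‖ < 1)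
    (z : EuclideanSpace ℂ (Fin n)) (hz : ‖z‖ < 1)
    (m : Fin n → ℕ) (hm : m ≠ 0) :
    ‖wpderivMulti m h z‖ + ‖wpderivMulti m g z‖ ≤
      (4 / Real.pi) * (n : ℝ) ^ (((∑ j, m j : ℕ) : ℝ) / 2) *
        (Nat.choose (n + (∑ j, m j) - 1) (n - 1) : ℝ) * ((∑ j, m j).factorial : ℝ) *
        (∏ j, (1 + ‖z j‖) ^ (m j)) / (1 - ‖z‖ ^ 2) ^ (∑ j, m j) := by
  have hball : closedPolydisc z (polydiscRadius m z) ⊆ Metric.ball 0 1 :=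
    closedPolydisc_polydiscRadius_subset_ball (by rwa [Fintype.card_fin]) hm hz
  have hbound : ∀ x ∈ closedPolydisc z (polydiscRadius m z), ‖h x + (starRingEnd ℂ) (g x)‖ ≤ 1 :=
    fun x hx ↦ hfd x (hball hx) ▸ (hmap x (hball hx)).le
  have hcauchy := norm_wpderivMulti_add_norm_wpderivMulti_le Metric.isOpen_ball hh hg hm
    (polydiscRadius_nonneg hz) (fun _ ↦ polydiscRadius_pos hz) hball hbound
  have hradius := prod_factorial_div_polydiscRadius_pow_le (m := m)
    (by rw [Fintype.card_fin]; omega) hz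
  rw [Fintype.card_fin] at hradius
  refine hcauchy.trans ((mul_le_mul_of_nonneg_left hradius (by positivity)).trans_eq ?_)
  ring
end

section
/- There is an absolute constant C₂ > 0 such that for every p ∈ [1,∞] and every integer n ≥ 2 the following holds: the Bohr radius ℛ*_P(𝔹_{ℓ_pⁿ}) — defined as the largest ρ ≥ 0 such that for every pluriharmonic f(z) = Σ_α a_α z^α + Σ_{|α|≥1} conj(b_α) conj(z)^α on 𝔹_{ℓ_pⁿ} with sup |f| ≤ 1 one has Σ_{k=1}^{∞} Σ_{|α|=k} (|a_α| + |b_α|) |z^α| ≤ 1 whenever ‖z‖_p < ρ — satisfies ℛ*_P(𝔹_{ℓ_pⁿ}) ≤ C₂ (log n / n)^{1 − 1/min{p,2}}. -/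
open scoped BigOperators ENNReal

/-- `ρ ≥ 0` witnesses the Bohr phenomenon on the `ℓ_p` unit ball of `ℂ^n`:
for every pluriharmonic `f = h + conj g` (with monomial expansions `a`, `b`,
`b 0 = 0`) bounded by `1` in modulus, the Bohr sum over multi-indices with
`|α| ≥ 1` is at most `1` whenever `‖z‖_p < ρ`
(every finite partial sum of the nonnegative-term Bohr sum is at most `1`). -/
def IsBohrBound (n : ℕ) (p : ℝ≥0∞) (ρ : ℝ) : Prop :=
  0 ≤ ρ ∧ ∀ f h g : (Fin n → ℂ) → ℂ, ∀ a b : (Fin n → ℕ) → ℂ,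
    b 0 = 0 →
    DifferentiableOn ℂ h {z | pnormE p z < 1} →
    DifferentiableOn ℂ g {z | pnormE p z < 1} →
    g 0 = 0 →
    (∀ z : Fin n → ℂ, pnormE p z < 1 → f z = h z + (starRingEnd ℂ) (g z)) →
    (∀ z : Fin n → ℂ, pnormE p z < 1 →
      HasSum (fun α : Fin n → ℕ => a α * ∏ k, z k ^ α k) (h z)) →
    (∀ z : Fin n → ℂ, pnormE p z < 1 →
      HasSum (fun α : Fin n → ℕ => b α * ∏ k, z k ^ α k) (g z)) →
    (∀ z : Fin n → ℂ, pnormE p z < 1 → ‖f z‖ ≤ 1) →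
    ∀ z : Fin n → ℂ, pnormE p z < ρ →
      ∀ s : Finset (Fin n → ℕ), 0 ∉ s →
        ∑ α ∈ s, (‖a α‖ + ‖b α‖) * ‖∏ k, z k ^ α k‖ ≤ 1

/-- The Bohr radius `ℛ*_P(𝔹_{ℓ_pⁿ})`: the largest `ρ` with the Bohr property. -/
noncomputable def bohrRadiusStar (n : ℕ) (p : ℝ≥0∞) : ℝ :=
  sSup {ρ : ℝ | IsBohrBound n p ρ}

/-!
A homogeneous polynomial whose coefficients all have modulus one but whose supremum on the ball is
small forces the Bohr radius to be small. To find one, put random signs on the `k ^ m` coefficients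
of an `m`-linear form on `ℂ^k`. A Chernoff bound at each point of a `1 / (2 m)`-net of the unit
ball, which has at most `(1 + 4 m) ^ (2 m k)` points, gives signs for which the Euclidean norm of
the form is `O(m² k)`. Feeding `m` disjoint blocks of `k` of the `n` variables to the form yields a
polynomial with `k ^ m` distinct monomials. With `q = min {p, 2}`, the Euclidean norm of a block is
at most its `q`-norm, so AM-GM over the blocks and the power mean inequality bound this polynomial
on the `ℓ_p` ball by `O(m² k) (n ^ (1 - q / p) / m) ^ (m / q)`. At the points with all coordinates
equal to `t`, its Bohr sum is `(k t) ^ m`; letting `t n ^ (1 / p)` tend to the Bohr radius `ρ` and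
taking `m`-th roots gives `k ρ ≤ O((m² k) ^ (1 / m)) (n / m) ^ (1 / q)`. For `m` about `log n` and
`k` about `n / m` the factor `(m² k) ^ (1 / m)` is bounded, and `ρ = O((m / n) ^ (1 - 1 / q))`.
-/

open Finset (univ)
open Metric
open scoped NNReal

section RandomSigns

variable {I Y : Type*} [Fintype I] [Fintype Y]

theorem sum_signs_exp_le [DecidableEq I] (d : I → ℝ) :
    ∑ ε : I → ℤˣ, Real.exp (∑ i, ((ε i : ℤ) : ℝ) * d i) ≤
      2 ^ Fintype.card I * Real.exp ((∑ i, d i ^ 2) / 2) := by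
  have two_cosh (x : ℝ) : ∑ u : ℤˣ, Real.exp (((u : ℤ) : ℝ) * x) = 2 * Real.cosh x := by
    rw [UnitsInt.univ, Finset.sum_pair (by decide), Real.cosh_eq]
    simp only [Units.val_one, Int.cast_one, one_mul, Units.val_neg, Int.cast_neg, neg_mul]
    ring
  calc ∑ ε : I → ℤˣ, Real.exp (∑ i, ((ε i : ℤ) : ℝ) * d i)
      = ∏ i, 2 * Real.cosh (d i) := by
        simp only [Real.exp_sum, ← two_cosh, Finset.prod_univ_sum, Fintype.piFinset_univ]
    _ ≤ ∏ i, 2 * Real.exp (d i ^ 2 / 2) := by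
        gcongr with i
        exact Real.cosh_le_exp_half_sq _
    _ = 2 ^ Fintype.card I * Real.exp ((∑ i, d i ^ 2) / 2) := by
        rw [Finset.prod_mul_distrib, ← Real.exp_sum, Finset.sum_div, Finset.prod_const,
          Finset.card_univ]

theorem exists_signs_abs_sum_le (c : Y → I → ℝ) {v : ℝ} (hc : ∀ y, ∑ i, c y i ^ 2 ≤ v) :
    ∃ ε : I → ℤˣ, ∀ y,
      |∑ i, ((ε i : ℤ) : ℝ) * c y i| ≤ Real.log (2 * Fintype.card Y) + v / 2 := by
  classical
  set s : (I → ℤˣ) → Y → ℝ := fun ε y => ∑ i, ((ε i : ℤ) : ℝ) * c y i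
  have moment_le (y : Y) : ∑ ε, (Real.exp (s ε y) + Real.exp (-s ε y)) ≤
      2 * (2 ^ Fintype.card I * Real.exp (v / 2)) := by
    have hpos := sum_signs_exp_le (c y)
    have hneg := sum_signs_exp_le (-c y)
    simp only [Pi.neg_apply, mul_neg, Finset.sum_neg_distrib, neg_sq] at hneg
    rw [Finset.sum_add_distrib, two_mul]
    refine (add_le_add hpos hneg).trans ?_
    gcongr <;> exact hc y
  obtain ⟨ε, -, hε⟩ : ∃ ε ∈ univ, ∑ y, (Real.exp (s ε y) + Real.exp (-s ε y)) ≤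
      2 * Fintype.card Y * Real.exp (v / 2) := by
    refine Finset.exists_le_of_sum_le Finset.univ_nonempty ?_
    rw [Finset.sum_comm]
    refine (Finset.sum_le_sum fun y _ => moment_le y).trans_eq ?_
    simp only [Finset.sum_const, Finset.card_univ, nsmul_eq_mul, Fintype.card_fun,
      Fintype.card_units_int, Nat.cast_pow, Nat.cast_ofNat]
    ring
  refine ⟨ε, fun y => ?_⟩
  have : Nonempty Y := ⟨y⟩
  have hy : Real.exp (s ε y) + Real.exp (-s ε y) ≤ 2 * Fintype.card Y * Real.exp (v / 2) :=
    (Finset.single_le_sum (f := fun y => Real.exp (s ε y) + Real.exp (-s ε y))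
      (fun _ _ => by positivity) (Finset.mem_univ y)).trans hε
  have hcard : 0 < (2 * Fintype.card Y : ℝ) := by positivity
  rw [← Real.exp_le_exp, Real.exp_add, Real.exp_log hcard]
  rcases abs_choice (s ε y) with h | h <;> rw [h] <;>
    linarith [Real.exp_pos (s ε y), Real.exp_pos (-s ε y)]

theorem exists_signs_norm_sum_le (c : Y → I → ℂ) {v : ℝ} (hc : ∀ y, ∑ i, ‖c y i‖ ^ 2 ≤ v) :
    ∃ ε : I → ℤˣ, ∀ y,
      ‖∑ i, ((ε i : ℤ) : ℂ) * c y i‖ ≤ 2 * Real.log (4 * Fintype.card Y) + v := by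
  obtain ⟨ε, hε⟩ := exists_signs_abs_sum_le
    (Sum.elim (fun y i => (c y i).re) fun y i => (c y i).im) (v := v) (by
      rintro (y | y) <;> refine (Finset.sum_le_sum fun i _ => ?_).trans (hc y) <;>
        rw [Complex.sq_norm, Complex.normSq_apply] <;>
        simp only [Sum.elim_inl, Sum.elim_inr] <;>
        nlinarith [sq_nonneg (c y i).re, sq_nonneg (c y i).im])
  refine ⟨ε, fun y => ?_⟩
  have hcard : (2 * Fintype.card (Y ⊕ Y) : ℝ) = 4 * Fintype.card Y := by
    rw [Fintype.card_sum]; push_cast; ring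
  have hre := hε (.inl y)
  have him := hε (.inr y)
  rw [hcard] at hre him
  refine (Complex.norm_le_abs_re_add_abs_im _).trans ?_
  simp only [Complex.re_sum, Complex.im_sum, Complex.mul_re, Complex.mul_im,
    Complex.intCast_re, Complex.intCast_im, zero_mul, sub_zero, add_zero]
  simp only [Sum.elim_inl, Sum.elim_inr] at hre him
  linarith

end RandomSigns

section Nets

variable {E : Type*} [NormedAddCommGroup E] [NormedSpace ℝ E] [FiniteDimensional ℝ E]

open MeasureTheory Module in
theorem card_le_of_isSeparated_of_subset_closedBall {δ : ℝ≥0} (hδ : δ ≠ 0) (s : Finset E)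
    (hs : (s : Set E) ⊆ closedBall 0 1) (hsep : IsSeparated δ (s : Set E)) :
    (s.card : ℝ) ≤ (1 + 2 / δ) ^ finrank ℝ E := by
  have hδ' : (0 : ℝ) < δ / 2 := by positivity
  borelize E
  let μ : Measure E := Measure.addHaar
  have disjoint : (s : Set E).PairwiseDisjoint fun c => ball c (δ / 2 : ℝ) := by
    intro c hc d hd hcd
    have hlt : (δ : ℝ) < dist c d := by
      have : (δ : ℝ≥0∞) < edist c d := hsep hc hd hcd
      rwa [edist_nndist, ENNReal.coe_lt_coe, ← NNReal.coe_lt_coe, coe_nndist] at this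
    exact ball_disjoint_ball (by linarith)
  have subset : ⋃ c ∈ s, ball c (δ / 2 : ℝ) ⊆ ball (0 : E) (1 + δ / 2) := by
    refine Set.iUnion₂_subset fun c hc => ball_subset_ball' ?_
    linarith [mem_closedBall.1 (hs hc)]
  have volume_le : (s.card : ℝ≥0∞) * ENNReal.ofReal ((δ / 2 : ℝ) ^ finrank ℝ E) * μ (ball 0 1) ≤
      ENNReal.ofReal ((1 + δ / 2 : ℝ) ^ finrank ℝ E) * μ (ball 0 1) := by
    calc _ = μ (⋃ c ∈ s, ball c (δ / 2 : ℝ)) := by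
          rw [measure_biUnion_finset disjoint fun c _ => measurableSet_ball]
          simp only [μ.addHaar_ball_of_pos _ hδ', Finset.sum_const, nsmul_eq_mul, mul_assoc]
      _ ≤ μ (ball (0 : E) (1 + δ / 2)) := measure_mono subset
      _ = _ := μ.addHaar_ball_of_pos _ (by positivity)
  have card_mul_le : (s.card : ℝ) * (δ / 2 : ℝ) ^ finrank ℝ E ≤ (1 + δ / 2 : ℝ) ^ finrank ℝ E := by
    have := ENNReal.toReal_le_of_le_ofReal (by positivity)
      ((ENNReal.mul_le_mul_iff_left (measure_ball_pos _ _ zero_lt_one).ne'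
        measure_ball_lt_top.ne).1 volume_le)
    rwa [ENNReal.toReal_mul, ENNReal.toReal_natCast,
      ENNReal.toReal_ofReal (by positivity)] at this
  rw [← le_div_iff₀ (by positivity), ← div_pow] at card_mul_le
  have hratio : (1 + δ / 2 : ℝ) / (δ / 2) = 1 + 2 / δ := by
    rw [add_div, div_self hδ'.ne', one_div_div, add_comm]
  rwa [hratio] at card_mul_le

open Module in
theorem exists_finset_isCover_closedBall {δ : ℝ≥0} (hδ : δ ≠ 0) :
    ∃ N : Finset E, (N : Set E) ⊆ closedBall 0 1 ∧ IsCover δ (closedBall (0 : E) 1) (N : Set E) ∧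
      (N.card : ℝ) ≤ (1 + 2 / δ) ^ finrank ℝ E := by
  have hpack : packingNumber δ (closedBall (0 : E) 1) ≠ ⊤ := by
    obtain ⟨C, -, hC, hcover⟩ := exists_finite_isCover_of_isCompact (ε := δ / 2) (by simpa using hδ)
      (isCompact_closedBall (0 : E) 1)
    have hle := (packingNumber_two_mul_le_externalCoveringNumber (δ / 2) _).trans
      hcover.externalCoveringNumber_le_encard
    rw [mul_div_cancel₀ _ two_ne_zero] at hle
    exact ne_top_of_le_ne_top hC.encard_lt_top.ne hle
  have hfin : (maximalSeparatedSet δ (closedBall (0 : E) 1)).Finite := by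
    rwa [← Set.encard_ne_top_iff, encard_maximalSeparatedSet hpack]
  refine ⟨hfin.toFinset, ?_, ?_, card_le_of_isSeparated_of_subset_closedBall hδ _ ?_ ?_⟩ <;>
    rw [hfin.coe_toFinset]
  · exact maximalSeparatedSet_subset
  · exact isCover_maximalSeparatedSet hpack
  · exact maximalSeparatedSet_subset
  · exact isSeparated_maximalSeparatedSet

theorem exists_finset_isCover_log_card_le (ι κ : Type*) [Fintype ι] [Fintype κ] [Nonempty ι] :
    ∃ N : Finset (ι → EuclideanSpace ℂ κ), (N : Set (ι → EuclideanSpace ℂ κ)) ⊆ closedBall 0 1 ∧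
      IsCover (2 * Fintype.card ι : ℝ≥0)⁻¹ (closedBall (0 : ι → EuclideanSpace ℂ κ) 1) N ∧
        Real.log (4 * N.card) ≤ 3 + 8 * Fintype.card ι ^ 2 * Fintype.card κ := by
  obtain ⟨N, hN, hcover, hcard⟩ := exists_finset_isCover_closedBall
    (E := ι → EuclideanSpace ℂ κ) (δ := (2 * Fintype.card ι : ℝ≥0)⁻¹) (by positivity)
  refine ⟨N, hN, hcover, ?_⟩
  set m := (Fintype.card ι : ℝ) with hm
  set k := (Fintype.card κ : ℝ)
  have card_pos : (0 : ℝ) < N.card := by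
    exact_mod_cast Finset.card_pos.2 (hcover.nonempty ⟨0, by simp⟩)
  have finrank_eq : Module.finrank ℝ (ι → EuclideanSpace ℂ κ) =
      2 * (Fintype.card ι * Fintype.card κ) := by
    simp only [Module.finrank_pi_fintype, finrank_real_of_complex, finrank_euclideanSpace,
      Finset.sum_const, Finset.card_univ, smul_eq_mul]
    ring
  have log_card_le : Real.log N.card ≤ 2 * (m * k) * Real.log (1 + 4 * m) := by
    have hratio : (1 + 2 / ((2 * Fintype.card ι : ℝ≥0)⁻¹ : ℝ≥0) : ℝ) = 1 + 4 * m := by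
      push_cast
      rw [div_inv_eq_mul, ← hm]
      ring
    rw [finrank_eq, hratio] at hcard
    refine (Real.log_le_log card_pos hcard).trans_eq ?_
    rw [Real.log_pow]
    push_cast
    rfl
  have log_le : Real.log (1 + 4 * m) ≤ 4 * m := by
    linarith [Real.log_le_sub_one_of_pos (by positivity : 0 < 1 + 4 * m)]
  have log_four_le : Real.log 4 ≤ 3 := by
    linarith [Real.log_le_sub_one_of_pos (zero_lt_four' ℝ)]
  calc Real.log (4 * N.card) = Real.log 4 + Real.log N.card :=
        Real.log_mul four_ne_zero card_pos.ne'
    _ ≤ 3 + 2 * (m * k) * (4 * m) := by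
        gcongr
        exact log_card_le.trans (by gcongr)
    _ = 3 + 8 * m ^ 2 * k := by ring

end Nets

section MultilinearNorm

variable {ι 𝕜 G : Type*} {E : ι → Type*} [Fintype ι] [RCLike 𝕜]
  [∀ i, NormedAddCommGroup (E i)] [∀ i, NormedSpace 𝕜 (E i)]
  [NormedAddCommGroup G] [NormedSpace 𝕜 G]

theorem opNorm_le_of_forall_norm_le_one (f : ContinuousMultilinearMap 𝕜 E G) {C : ℝ} (hC : 0 ≤ C)
    (h : ∀ x, ‖x‖ ≤ 1 → ‖f x‖ ≤ C) : ‖f‖ ≤ C := by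
  refine ContinuousMultilinearMap.opNorm_le_bound hC fun x => ?_
  set u : ∀ i, E i := fun i => ((‖x i‖⁻¹ : ℝ) : 𝕜) • x i with hu
  have norm_u_le : ‖u‖ ≤ 1 := (pi_norm_le_iff_of_nonneg zero_le_one).2 fun i => by
    rw [norm_smul, RCLike.norm_ofReal, abs_inv, abs_norm]
    exact inv_mul_le_one
  have hx : x = fun i => (‖x i‖ : 𝕜) • u i := by
    funext i
    rcases eq_or_ne (x i) 0 with h0 | h0
    · simp [hu, h0]
    · simp [hu, smul_smul, h0]
  calc ‖f x‖ = (∏ i, ‖x i‖) * ‖f u‖ := by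
        conv_lhs => rw [hx, f.map_smul_univ, norm_smul, norm_prod]
        simp
    _ ≤ C * ∏ i, ‖x i‖ := by
        rw [mul_comm]
        gcongr
        exact h u norm_u_le

theorem opNorm_le_two_mul_of_isCover (f : ContinuousMultilinearMap 𝕜 E G) {N : Set (∀ i, E i)}
    {δ : ℝ≥0} {B : ℝ} (hN : N ⊆ closedBall 0 1) (hcover : IsCover δ (closedBall 0 1) N)
    (hδ : Fintype.card ι * (δ : ℝ) ≤ 1 / 2) (hf : ∀ y ∈ N, ‖f y‖ ≤ B) : ‖f‖ ≤ 2 * B := by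
  have approx (x : ∀ i, E i) (hx : ‖x‖ ≤ 1) : ‖f x‖ ≤ B + ‖f‖ / 2 := by
    obtain ⟨y, hy, hxy⟩ := hcover (mem_closedBall_zero_iff.2 hx)
    replace hxy : ‖x - y‖ ≤ δ := by
      rw [← dist_eq_norm]
      exact edist_le_coe.1 hxy
    have hmax : max ‖x‖ ‖y‖ ^ (Fintype.card ι - 1) ≤ 1 :=
      pow_le_one₀ (by positivity) (max_le hx (mem_closedBall_zero_iff.1 (hN hy)))
    have hsub : ‖f x - f y‖ ≤ ‖f‖ / 2 :=
      calc ‖f x - f y‖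
          ≤ ‖f‖ * Fintype.card ι * max ‖x‖ ‖y‖ ^ (Fintype.card ι - 1) * ‖x - y‖ :=
            f.norm_image_sub_le x y
        _ ≤ ‖f‖ * Fintype.card ι * 1 * δ := by gcongr
        _ = ‖f‖ * (Fintype.card ι * δ) := by ring
        _ ≤ ‖f‖ * (1 / 2) := by gcongr
        _ = ‖f‖ / 2 := by ring
    linarith [norm_le_norm_add_norm_sub' (f x) (f y), hf y hy]
  have hB : 0 ≤ B + ‖f‖ / 2 := (norm_nonneg _).trans (approx 0 (by simp))
  linarith [opNorm_le_of_forall_norm_le_one f hB approx]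

end MultilinearNorm

section CoeffForm

variable {ι κ : Type*} [Fintype ι] [Fintype κ] [DecidableEq ι]

/-- The multilinear form on `ι`-tuples of vectors of `ℂ^κ` whose coefficients with respect to the
standard basis are the entries of the array `a`; random signs are put on these coefficients. -/
noncomputable def coeffForm (a : (ι → κ) → ℂ) :
    ContinuousMultilinearMap ℂ (fun _ : ι => EuclideanSpace ℂ κ) ℂ :=
  ∑ i, a i • (ContinuousMultilinearMap.mkPiAlgebra ℂ ι ℂ).compContinuousLinearMap
    fun j => EuclideanSpace.proj (i j)

theorem coeffForm_apply (a : (ι → κ) → ℂ) (x : ι → EuclideanSpace ℂ κ) :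
    coeffForm a x = ∑ i, a i * ∏ j, x j (i j) := by
  simp [coeffForm]

theorem sum_norm_prod_sq {𝕜 : Type*} [RCLike 𝕜] (x : ι → EuclideanSpace 𝕜 κ) :
    ∑ i : ι → κ, ‖∏ j, x j (i j)‖ ^ 2 = ∏ j, ‖x j‖ ^ 2 := by
  simp only [norm_prod, ← Finset.prod_pow, EuclideanSpace.norm_sq_eq, Finset.prod_univ_sum,
    Fintype.piFinset_univ]

theorem exists_norm_eq_one_norm_coeffForm_le [Nonempty ι] [Nonempty κ] :
    ∃ a : (ι → κ) → ℂ, (∀ i, ‖a i‖ = 1) ∧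
      ‖coeffForm a‖ ≤ 46 * Fintype.card ι ^ 2 * Fintype.card κ := by
  obtain ⟨N, hN, hcover, log_card_le⟩ := exists_finset_isCover_log_card_le ι κ
  obtain ⟨ε, hε⟩ := exists_signs_norm_sum_le (Y := N)
    (fun y (i : ι → κ) => ∏ j, y.1 j (i j)) (v := 1) fun y => by
      rw [sum_norm_prod_sq]
      refine Finset.prod_le_one (fun _ _ => by positivity) fun j _ => ?_
      exact pow_le_one₀ (norm_nonneg _)
        ((norm_le_pi_norm y.1 j).trans (mem_closedBall_zero_iff.1 (hN y.2)))
  set m := (Fintype.card ι : ℝ)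
  set k := (Fintype.card κ : ℝ)
  refine ⟨fun i => ((ε i : ℤ) : ℂ), fun i => ?_, ?_⟩
  · rcases Int.units_eq_one_or (ε i) with h | h <;> simp [h]
  · have le_on_net (y) (hy : y ∈ (N : Set (ι → EuclideanSpace ℂ κ))) :
        ‖coeffForm (fun i => ((ε i : ℤ) : ℂ)) y‖ ≤ 2 * (3 + 8 * m ^ 2 * k) + 1 := by
      have norm_le := hε ⟨y, hy⟩
      rw [Fintype.card_coe] at norm_le
      rw [coeffForm_apply]
      linarith
    have one_le : 1 ≤ m ^ 2 * k :=
      one_le_mul_of_one_le_of_one_le (one_le_pow₀ (Nat.one_le_cast.2 Fintype.card_pos))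
        (Nat.one_le_cast.2 Fintype.card_pos)
    have := opNorm_le_two_mul_of_isCover _ hN hcover (by push_cast; field_simp; rfl) le_on_net
    linarith

end CoeffForm

section BlockInequality

theorem rpow_sum_le_sum_rpow {ι : Type*} (s : Finset ι) (f : ι → ℝ≥0) {r : ℝ} (hr : 0 < r)
    (hr1 : r ≤ 1) : (∑ i ∈ s, f i) ^ r ≤ ∑ i ∈ s, f i ^ r :=
  Finset.le_sum_of_subadditive (· ^ r) (NNReal.zero_rpow hr.ne').le
    (fun a b => NNReal.rpow_add_le_add_rpow a b hr.le hr1) s f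

variable {𝕜 ι κ σ : Type*} [RCLike 𝕜] [Fintype ι] [Fintype κ] [Fintype σ]

theorem norm_rpow_le_sum_norm_rpow (x : EuclideanSpace 𝕜 κ) {q : ℝ} (hq : 0 < q) (hq2 : q ≤ 2) :
    ‖x‖ ^ q ≤ ∑ l, ‖x l‖ ^ q := by
  have hrpow (y : ℝ) (hy : 0 ≤ y) : (y ^ 2) ^ (q / 2) = y ^ q := by
    rw [← Real.rpow_natCast, ← Real.rpow_mul hy]
    congr 1
    push_cast
    ring
  have h := rpow_sum_le_sum_rpow univ (fun l => ‖x l‖₊ ^ 2) (half_pos hq) (by linarith)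
  rw [← NNReal.coe_le_coe] at h
  push_cast at h
  rw [← EuclideanSpace.norm_sq_eq, hrpow _ (norm_nonneg _)] at h
  simpa only [hrpow _ (norm_nonneg _)] using h

theorem prod_le_mean_pow [Nonempty ι] (w : ι → ℝ) (hw : ∀ i, 0 ≤ w i) :
    ∏ i, w i ≤ ((∑ i, w i) / Fintype.card ι) ^ Fintype.card ι := by
  have h := Real.geom_mean_le_arith_mean univ 1 w (fun _ _ => zero_le_one)
    (by simp [Fintype.card_pos]) fun i _ => hw i
  simp only [Pi.one_apply, Real.rpow_one, Finset.sum_const, Finset.card_univ, nsmul_eq_mul,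
    mul_one, one_mul] at h
  have hprod : 0 ≤ ∏ i, w i := Finset.prod_nonneg fun i _ => hw i
  calc ∏ i, w i = ((∏ i, w i) ^ (Fintype.card ι : ℝ)⁻¹) ^ Fintype.card ι :=
        (Real.rpow_inv_natCast_pow hprod Fintype.card_ne_zero).symm
    _ ≤ _ := by gcongr

theorem prod_norm_block_rpow_le [Nonempty ι] (e : ι × κ ↪ σ) (z : σ → 𝕜) {q : ℝ} (hq : 0 < q)
    (hq2 : q ≤ 2) :
    (∏ j, ‖WithLp.toLp 2 fun l => z (e (j, l))‖) ^ q ≤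
      ((∑ v, ‖z v‖ ^ q) / Fintype.card ι) ^ Fintype.card ι := by
  have sum_le : ∑ j, ‖WithLp.toLp 2 fun l => z (e (j, l))‖ ^ q ≤ ∑ v, ‖z v‖ ^ q :=
    calc ∑ j, ‖WithLp.toLp 2 fun l => z (e (j, l))‖ ^ q
        ≤ ∑ j, ∑ l, ‖z (e (j, l))‖ ^ q := by
          gcongr with j
          exact norm_rpow_le_sum_norm_rpow _ hq hq2
      _ = ∑ v ∈ univ.map e, ‖z v‖ ^ q := by rw [Finset.sum_map, Fintype.sum_prod_type]
      _ ≤ ∑ v, ‖z v‖ ^ q :=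
          Finset.sum_le_univ_sum_of_nonneg fun v => by positivity
  rw [← Real.finsetProd_rpow _ _ fun _ _ => norm_nonneg _]
  refine (prod_le_mean_pow _ fun _ => by positivity).trans ?_
  gcongr

end BlockInequality

section BlockExponent

variable {ι κ σ : Type*} [Fintype ι] [DecidableEq σ]

/-- The exponent of the monomial `∏ j, z (e (j, i j))`, whose variables are grouped by `e` into
`ι` blocks indexed by `κ` and which picks the variable `i j` from the block `j`: these are the
monomials of a multilinear form evaluated at the blocks of `z`. -/
def blockExponent (e : ι × κ ↪ σ) (i : ι → κ) : σ → ℕ :=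
  ∑ j, Pi.single (e (j, i j)) 1

theorem prod_pow_blockExponent [Fintype σ] {M : Type*} [CommMonoid M] (e : ι × κ ↪ σ) (i : ι → κ)
    (z : σ → M) :
    ∏ v, z v ^ blockExponent e i v = ∏ j, z (e (j, i j)) := by
  simp only [blockExponent, Finset.sum_apply, ← Finset.prod_pow_eq_pow_sum]
  rw [Finset.prod_comm]
  refine Finset.prod_congr rfl fun j _ => ?_
  rw [Fintype.prod_eq_single (e (j, i j))]
  · rw [Pi.single_eq_same, pow_one]
  · intro v hv
    rw [Pi.single_eq_of_ne hv, pow_zero]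

theorem blockExponent_apply [DecidableEq κ] (e : ι × κ ↪ σ) (i : ι → κ) (j : ι) (l : κ) :
    blockExponent e i (e (j, l)) = if i j = l then 1 else 0 := by
  rw [blockExponent, Finset.sum_apply, Fintype.sum_eq_single j]
  · simp [Pi.single_apply, eq_comm]
  · intro j' hj'
    exact Pi.single_eq_of_ne (fun h => hj' (congrArg Prod.fst (e.injective h)).symm) _

theorem blockExponent_injective (e : ι × κ ↪ σ) : Function.Injective (blockExponent e) := by
  classical
  intro i i' h
  funext j
  have hj := congrFun h (e (j, i' j))
  simpa [blockExponent_apply] using hj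

theorem blockExponent_ne_zero [Nonempty ι] (e : ι × κ ↪ σ) (i : ι → κ) :
    blockExponent e i ≠ 0 := by
  classical
  obtain ⟨j⟩ := ‹Nonempty ι›
  intro h
  simpa [blockExponent_apply] using congrFun h (e (j, i j))

theorem exists_norm_eq_one_norm_sum_blockExponent_le [Fintype κ] [Fintype σ] [Nonempty ι]
    [Nonempty κ] [DecidableEq ι] (e : ι × κ ↪ σ) {q : ℝ} (hq : 0 < q) (hq2 : q ≤ 2) :
    ∃ a : (ι → κ) → ℂ, (∀ i, ‖a i‖ = 1) ∧ ∀ z : σ → ℂ,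
      ‖∑ i, a i * ∏ v, z v ^ blockExponent e i v‖ ≤
        46 * Fintype.card ι ^ 2 * Fintype.card κ *
          (((∑ v, ‖z v‖ ^ q) / Fintype.card ι) ^ q⁻¹) ^ Fintype.card ι := by
  obtain ⟨a, ha, norm_le⟩ := exists_norm_eq_one_norm_coeffForm_le (ι := ι) (κ := κ)
  refine ⟨a, ha, fun z => ?_⟩
  set x : ι → EuclideanSpace ℂ κ := fun j => WithLp.toLp 2 fun l => z (e (j, l)) with hx
  have eval_eq : ∑ i, a i * ∏ v, z v ^ blockExponent e i v = coeffForm a x := by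
    simp only [coeffForm_apply, prod_pow_blockExponent, hx]
  have prod_le : ∏ j, ‖x j‖ ≤ (((∑ v, ‖z v‖ ^ q) / Fintype.card ι) ^ q⁻¹) ^ Fintype.card ι := by
    rw [Real.rpow_pow_comm (by positivity), Real.le_rpow_inv_iff_of_pos
      (Finset.prod_nonneg fun _ _ => norm_nonneg _) (by positivity) hq]
    exact prod_norm_block_rpow_le e z hq hq2
  rw [eval_eq]
  refine ((coeffForm a).le_opNorm x).trans ?_
  gcongr

end BlockExponent

section PNorm

variable {n : ℕ} {p : ℝ≥0∞}

theorem pnormE_nonneg (z : Fin n → ℂ) : 0 ≤ pnormE p z := by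
  unfold pnormE
  split_ifs
  · exact Real.iSup_nonneg fun j => norm_nonneg _
  · positivity

theorem pnormE_const (hp : p ≠ 0) (hn : n ≠ 0) {t : ℝ} (ht : 0 ≤ t) :
    pnormE p (fun _ : Fin n => (t : ℂ)) = t * (n : ℝ) ^ p.toReal⁻¹ := by
  have : NeZero n := ⟨hn⟩
  have norm_t : ‖(t : ℂ)‖ = t := by rw [Complex.norm_real, Real.norm_of_nonneg ht]
  rcases eq_or_ne p ∞ with rfl | hp'
  · simp [pnormE, abs_of_nonneg ht]
  · have hp0 : p.toReal ≠ 0 := (ENNReal.toReal_pos hp hp').ne'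
    rw [pnormE, if_neg hp', norm_t, Finset.sum_const, Finset.card_fin, nsmul_eq_mul,
      Real.mul_rpow n.cast_nonneg (by positivity), one_div, Real.rpow_rpow_inv ht hp0, mul_comm]

-- As `∞.toReal = 0` and `0⁻¹ = 0`, the expression `p.toReal⁻¹` means `1 / p` also for `p = ∞`.
theorem sum_norm_rpow_le {q : ℝ} (hq : 0 < q) (hqp : ENNReal.ofReal q ≤ p) (z : Fin n → ℂ) :
    ∑ v, ‖z v‖ ^ q ≤ (n : ℝ) ^ (1 - q * p.toReal⁻¹) * pnormE p z ^ q := by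
  rcases eq_or_ne p ∞ with rfl | hp
  · have le_sup (v : Fin n) : ‖z v‖ ≤ pnormE ∞ z := by
      rw [pnormE, if_pos rfl]
      exact le_ciSup (Set.finite_range fun v => ‖z v‖).bddAbove v
    calc ∑ v, ‖z v‖ ^ q ≤ ∑ _v : Fin n, pnormE ∞ z ^ q := by
          gcongr with v
          exact le_sup v
      _ = _ := by simp
  · have hqp' : q ≤ p.toReal := (ENNReal.ofReal_le_iff_le_toReal hp).1 hqp
    have hp0 : 0 < p.toReal := hq.trans_le hqp'
    have hr : 0 < p.toReal / q := by positivity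
    have hpow (v : Fin n) : (‖z v‖ ^ q) ^ (p.toReal / q) = ‖z v‖ ^ p.toReal := by
      rw [← Real.rpow_mul (norm_nonneg _), mul_div_cancel₀ _ hq.ne']
    have power_mean := Real.rpow_sum_le_const_mul_sum_rpow_of_nonneg univ
      (f := fun v => ‖z v‖ ^ q) ((one_le_div hq).2 hqp') fun v _ => by positivity
    simp only [hpow, Finset.card_fin] at power_mean
    calc ∑ v, ‖z v‖ ^ q
        ≤ ((n : ℝ) ^ (p.toReal / q - 1) * ∑ v, ‖z v‖ ^ p.toReal) ^ (p.toReal / q)⁻¹ :=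
          (Real.le_rpow_inv_iff_of_pos (by positivity) (by positivity) hr).2 power_mean
      _ = (n : ℝ) ^ (1 - q * p.toReal⁻¹) * pnormE p z ^ q := by
          rw [pnormE, if_neg hp, Real.mul_rpow (by positivity) (by positivity),
            ← Real.rpow_mul n.cast_nonneg, ← Real.rpow_mul (by positivity)]
          congr 2 <;> field_simp

end PNorm

section BlockSizes

theorem exists_block_sizes {n : ℕ} (hn : 2 ≤ n) : ∃ m k : ℕ, 0 < m ∧ 0 < k ∧ m * k ≤ n ∧
    n ≤ 2 * (m * k) ∧ Real.log n ≤ m ∧ m ≤ 3 * Real.log n := by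
  have hn' : (2 : ℝ) ≤ n := by exact_mod_cast hn
  have half_lt_log : 1 / 2 < Real.log n :=
    (by linarith [Real.log_two_gt_d9] : 1 / 2 < Real.log 2).trans_le
      (Real.log_le_log two_pos hn')
  set m := ⌈Real.log n⌉₊
  have m_pos : 0 < m := Nat.ceil_pos.2 (by linarith)
  have m_le : m ≤ n := Nat.ceil_le.2 (Real.log_le_self n.cast_nonneg)
  refine ⟨m, n / m, m_pos, Nat.div_pos m_le m_pos, Nat.mul_div_le n m, ?_, Nat.le_ceil _, ?_⟩
  · have := Nat.mul_le_mul_left m (Nat.div_pos m_le m_pos)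
    have := Nat.lt_mul_div_succ n m_pos
    rw [mul_add] at this
    omega
  · linarith [Nat.ceil_lt_add_one (by linarith : 0 ≤ Real.log n)]

theorem mul_sq_mul_le_pow {m k : ℕ} (hm : 0 < m) (hk : 0 < k) (hkm : Real.log k ≤ m) :
    46 * (m : ℝ) ^ 2 * k ≤ (184 * Real.exp 1) ^ m := by
  have h46 : (46 : ℝ) ≤ 46 ^ m := le_self_pow₀ (by norm_num) hm.ne'
  have hm2 : (m : ℝ) ^ 2 ≤ 4 ^ m := by
    have : m ≤ 2 ^ m := Nat.lt_two_pow_self.le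
    calc (m : ℝ) ^ 2 ≤ (2 ^ m) ^ 2 := by gcongr; exact_mod_cast this
      _ = 4 ^ m := by rw [← pow_mul, mul_comm, pow_mul]; norm_num
  have hk' : (k : ℝ) ≤ Real.exp 1 ^ m := by
    rw [← Real.exp_nat_mul, mul_one]
    exact (Real.log_le_iff_le_exp (by positivity)).1 hkm
  calc 46 * (m : ℝ) ^ 2 * k ≤ 46 ^ m * 4 ^ m * Real.exp 1 ^ m := by gcongr
    _ = (184 * Real.exp 1) ^ m := by rw [← mul_pow, ← mul_pow]; norm_num

theorem rpow_le_three_mul_rpow {x y θ : ℝ} (hx : 0 < x) (hxy : x ≤ y) (hyx : y ≤ 3 * x)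
    (hθ : θ ≤ 1) : y ^ θ ≤ 3 * x ^ θ := by
  rcases le_total θ 0 with hθ0 | hθ0
  · linarith [Real.rpow_le_rpow_of_nonpos hx hxy hθ0, Real.rpow_nonneg hx.le θ]
  · calc y ^ θ ≤ (3 * x) ^ θ := Real.rpow_le_rpow (by linarith) hyx hθ0
      _ = 3 ^ θ * x ^ θ := Real.mul_rpow (by norm_num) hx.le
      _ ≤ 3 * x ^ θ := by
        gcongr
        exact Real.rpow_le_self_of_one_le (by norm_num) hθ

end BlockSizes

section BohrBound

variable {n : ℕ} {p : ℝ≥0∞} {ρ : ℝ}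

theorem IsBohrBound.sum_norm_le {J : Type*} [Fintype J] (hρ : IsBohrBound n p ρ)
    {b : J → Fin n → ℕ} (hb : Function.Injective b) (hb0 : ∀ j, b j ≠ 0) (c : J → ℂ) {D : ℝ}
    (hD : 0 < D) (hc : ∀ w, pnormE p w < 1 → ‖∑ j, c j * ∏ v, w v ^ b j v‖ ≤ D)
    {z : Fin n → ℂ} (hz : pnormE p z < ρ) :
    ∑ j, ‖c j * ∏ v, z v ^ b j v‖ ≤ D := by
  classical
  let h : (Fin n → ℂ) → ℂ := fun w => ∑ j, c j / D * ∏ v, w v ^ b j v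
  let a : (Fin n → ℕ) → ℂ := Function.extend b (fun j => c j / D) 0
  have a_apply (j : J) : a (b j) = c j / D := hb.extend_apply _ _ j
  have hasSum_h (w : Fin n → ℂ) : HasSum (fun α => a α * ∏ v, w v ^ α v) (h w) := by
    refine (hb.hasSum_iff fun α hα => ?_).1 ?_
    · rw [show a α = 0 from Function.extend_apply' _ _ _ hα, zero_mul]
    · simpa only [Function.comp_def, a_apply] using hasSum_fintype _
  have norm_h_le (w : Fin n → ℂ) (hw : pnormE p w < 1) : ‖h w‖ ≤ 1 := by
    have : h w = (∑ j, c j * ∏ v, w v ^ b j v) / D := by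
      simp only [h, Finset.sum_div, div_mul_eq_mul_div]
    rw [this, norm_div, Complex.norm_real, Real.norm_of_nonneg hD.le]
    exact (div_le_one hD).2 (hc w hw)
  have bohr := hρ.2 h h 0 a 0 rfl (by fun_prop) (differentiableOn_const 0) rfl (by simp)
    (fun w _ => hasSum_h w) (by simp) norm_h_le z hz (univ.map ⟨b, hb⟩) (by simpa using hb0)
  rw [Finset.sum_map] at bohr
  simp only [Function.Embedding.coeFn_mk, a_apply, Pi.zero_apply, norm_zero, add_zero, norm_div,
    Complex.norm_real, Real.norm_of_nonneg hD.le, div_mul_eq_mul_div, ← Finset.sum_div,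
    ← norm_mul] at bohr
  exact (div_le_one hD).1 bohr

variable {ι κ : Type*} [Fintype ι] [Fintype κ] [Nonempty ι] [Nonempty κ]

theorem IsBohrBound.card_mul_pow_le_of_mul_rpow_lt (hρ : IsBohrBound n p ρ) (e : ι × κ ↪ Fin n)
    {q : ℝ} (hq : 0 < q) (hq2 : q ≤ 2) (hqp : ENNReal.ofReal q ≤ p) {t : ℝ} (ht : 0 ≤ t)
    (htρ : t * (n : ℝ) ^ p.toReal⁻¹ < ρ) :
    (Fintype.card κ * t) ^ Fintype.card ι ≤ 46 * Fintype.card ι ^ 2 * Fintype.card κ *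
      (((n : ℝ) ^ (1 - q * p.toReal⁻¹) / Fintype.card ι) ^ q⁻¹) ^ Fintype.card ι := by
  classical
  have hp : p ≠ 0 := ((ENNReal.ofReal_pos.2 hq).trans_le hqp).ne'
  have hn : 0 < n := Fin.pos (e (Classical.arbitrary _))
  obtain ⟨a, ha, norm_le⟩ := exists_norm_eq_one_norm_sum_blockExponent_le e hq hq2
  have bohr := hρ.sum_norm_le (blockExponent_injective e) (blockExponent_ne_zero e) a
    (D := 46 * Fintype.card ι ^ 2 * Fintype.card κ *
      (((n : ℝ) ^ (1 - q * p.toReal⁻¹) / Fintype.card ι) ^ q⁻¹) ^ Fintype.card ι)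
    (by positivity) (fun w hw => by
      refine (norm_le w).trans ?_
      gcongr
      refine (sum_norm_rpow_le hq hqp w).trans (mul_le_of_le_one_right (by positivity) ?_)
      exact Real.rpow_le_one (pnormE_nonneg w) hw.le hq.le)
    ((pnormE_const hp hn.ne' ht).trans_lt htρ)
  have norm_term (i : ι → κ) :
      ‖a i * ∏ v, (t : ℂ) ^ blockExponent e i v‖ = t ^ Fintype.card ι := by
    rw [prod_pow_blockExponent e i fun _ => (t : ℂ), norm_mul, ha, one_mul, Finset.prod_const,
      norm_pow, Complex.norm_real, Real.norm_of_nonneg ht, Finset.card_univ]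
  simpa only [norm_term, Finset.sum_const, Finset.card_univ, Fintype.card_fun, nsmul_eq_mul,
    Nat.cast_pow, ← mul_pow] using bohr

theorem IsBohrBound.card_mul_pow_le (hρ : IsBohrBound n p ρ) (e : ι × κ ↪ Fin n) {q : ℝ}
    (hq : 0 < q) (hq2 : q ≤ 2) (hqp : ENNReal.ofReal q ≤ p) {τ : ℝ} (hτ : 0 ≤ τ) (hτρ : τ < ρ) :
    (Fintype.card κ * τ) ^ Fintype.card ι ≤ 46 * Fintype.card ι ^ 2 * Fintype.card κ *
      ((n / Fintype.card ι : ℝ) ^ q⁻¹) ^ Fintype.card ι := by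
  have hn : 0 < n := Fin.pos (e (Classical.arbitrary _))
  set m := Fintype.card ι
  set θ := p.toReal⁻¹
  have exponent_eq : (n : ℝ) ^ θ * ((n : ℝ) ^ (1 - q * θ) / m) ^ q⁻¹ = (n / m : ℝ) ^ q⁻¹ := by
    rw [Real.div_rpow (by positivity) m.cast_nonneg, Real.div_rpow n.cast_nonneg m.cast_nonneg,
      ← Real.rpow_mul n.cast_nonneg, mul_div_assoc', ← Real.rpow_add (by positivity)]
    congr 2
    field_simp
    ring
  have le_const := hρ.card_mul_pow_le_of_mul_rpow_lt e hq hq2 hqp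
    (t := τ / (n : ℝ) ^ θ) (by positivity) (by rwa [div_mul_cancel₀ _ (by positivity)])
  calc (Fintype.card κ * τ) ^ m
      = ((n : ℝ) ^ θ) ^ m * (Fintype.card κ * (τ / (n : ℝ) ^ θ)) ^ m := by
        rw [← mul_pow]
        field_simp
    _ ≤ ((n : ℝ) ^ θ) ^ m *
          (46 * m ^ 2 * Fintype.card κ * (((n : ℝ) ^ (1 - q * θ) / m) ^ q⁻¹) ^ m) := by
        gcongr
    _ = 46 * m ^ 2 * Fintype.card κ * ((n / m : ℝ) ^ q⁻¹) ^ m := by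
        rw [← exponent_eq, mul_pow]
        ring

theorem IsBohrBound.mul_le_of_log_le (hρ : IsBohrBound n p ρ) {m k : ℕ} (hm : 0 < m) (hk : 0 < k)
    (hmk : m * k ≤ n) (hlog : Real.log k ≤ m) {q : ℝ} (hq : 0 < q) (hq2 : q ≤ 2)
    (hqp : ENNReal.ofReal q ≤ p) {τ : ℝ} (hτ : 0 ≤ τ) (hτρ : τ < ρ) :
    k * τ ≤ 184 * Real.exp 1 * (n / m : ℝ) ^ q⁻¹ := by
  have : NeZero m := ⟨hm.ne'⟩
  have : NeZero k := ⟨hk.ne'⟩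
  have pow_le := hρ.card_mul_pow_le (finProdFinEquiv.toEmbedding.trans (Fin.castLEEmb hmk))
    hq hq2 hqp hτ hτρ
  simp only [Fintype.card_fin] at pow_le
  refine (pow_le_pow_iff_left₀ (by positivity) (by positivity) hm.ne').1 (pow_le.trans ?_)
  rw [mul_pow _ (_ ^ q⁻¹)]
  gcongr
  exact mul_sq_mul_le_pow hm hk hlog

theorem IsBohrBound.le_log_div_rpow (hρ : IsBohrBound n p ρ) (hn : 2 ≤ n) {q : ℝ} (hq : 0 < q)
    (hq2 : q ≤ 2) (hqp : ENNReal.ofReal q ≤ p) {τ : ℝ} (hτ : 0 ≤ τ) (hτρ : τ < ρ) :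
    τ ≤ 1104 * Real.exp 1 * (Real.log n / n) ^ (1 - q⁻¹) := by
  obtain ⟨m, k, hm, hk, hmk, hnmk, hlog, hlog3⟩ := exists_block_sizes hn
  have hm0 : (0 : ℝ) < m := by positivity
  have hn0 : (0 : ℝ) < n := by positivity
  have log_k_le : Real.log k ≤ m := by
    have hkn : k ≤ n := (Nat.le_mul_of_pos_left k hm).trans hmk
    exact (Real.log_le_log (by positivity) (Nat.cast_le.2 hkn)).trans hlog
  have k_mul_le := hρ.mul_le_of_log_le hm hk hmk log_k_le hq hq2 hqp hτ hτρ
  have n_div_le : (n / m : ℝ) ≤ 2 * k := by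
    rw [div_le_iff₀ hm0]
    exact_mod_cast hnmk.trans_eq (by ring)
  have ratio_le : (m / n : ℝ) ^ (1 - q⁻¹) ≤ 3 * (Real.log n / n) ^ (1 - q⁻¹) :=
    rpow_le_three_mul_rpow (div_pos (Real.log_pos (by exact_mod_cast hn)) hn0) (by gcongr)
      (by rw [mul_div_assoc']; gcongr) (by linarith [inv_pos.2 hq])
  calc τ = (m / n : ℝ) * (n / m * τ) := by field_simp
    _ ≤ (m / n : ℝ) * (2 * k * τ) := by gcongr
    _ = (m / n : ℝ) * (2 * (k * τ)) := by ring
    _ ≤ (m / n : ℝ) * (2 * (184 * Real.exp 1 * (n / m : ℝ) ^ q⁻¹)) := by gcongr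
    _ = 368 * Real.exp 1 * (m / n : ℝ) ^ (1 - q⁻¹) := by
        rw [Real.rpow_sub (by positivity), Real.rpow_one, ← inv_div (m : ℝ),
          Real.inv_rpow (by positivity)]
        ring
    _ ≤ 368 * Real.exp 1 * (3 * (Real.log n / n) ^ (1 - q⁻¹)) := by gcongr
    _ = 1104 * Real.exp 1 * (Real.log n / n) ^ (1 - q⁻¹) := by ring

end BohrBound

theorem stmt14_general :
    ∃ C₂ : ℝ, 0 < C₂ ∧ ∀ p : ℝ≥0∞, 0 < p → ∀ n : ℕ, 2 ≤ n →
      bohrRadiusStar n p ≤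
        C₂ * (Real.log n / n) ^ (1 - ((min p 2).toReal)⁻¹) := by
  refine ⟨1104 * Real.exp 1, by positivity, fun p hp n hn => ?_⟩
  have min_ne_top : min p 2 ≠ ∞ := ne_top_of_le_ne_top ENNReal.ofNat_ne_top (min_le_right p 2)
  have hq : 0 < (min p 2).toReal := ENNReal.toReal_pos (lt_min hp two_pos).ne' min_ne_top
  have hq2 : (min p 2).toReal ≤ 2 := ENNReal.toReal_mono ENNReal.ofNat_ne_top (min_le_right p 2)
  have hqp : ENNReal.ofReal (min p 2).toReal ≤ p :=
    (ENNReal.ofReal_toReal min_ne_top).trans_le (min_le_left p 2)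
  have bound_nonneg : 0 ≤ 1104 * Real.exp 1 * (Real.log n / n) ^ (1 - ((min p 2).toReal)⁻¹) := by
    positivity
  refine Real.sSup_le (fun ρ hρ => le_of_forall_lt_imp_le_of_dense fun τ hτρ => ?_) bound_nonneg
  rcases le_total τ 0 with hτ | hτ
  · exact hτ.trans bound_nonneg
  · exact hρ.le_log_div_rpow hn hq hq2 hqp hτ hτρ

theorem stmt14 :
    ∃ C₂ : ℝ, 0 < C₂ ∧ ∀ p : ℝ≥0∞, 1 ≤ p → ∀ n : ℕ, 2 ≤ n →
      bohrRadiusStar n p ≤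
        C₂ * (Real.log n / n) ^ (1 - ((min p 2).toReal)⁻¹) := by
  obtain ⟨C₂, hC₂, bound⟩ := stmt14_general
  exact ⟨C₂, hC₂, fun p hp => bound p (zero_lt_one.trans_le hp)⟩
end
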